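/- arXiv:1701.04050 — 3 statements merged into one kernel-verified Lean document; each statement's English description precedes it below -/
import Mathlib

section
/- Let 0 < α < 1 and let k : ℝ → ℝ be a smooth compactly supported function with k(0) = 0. Define g : ℝ → ℝ by g(z) = sgn(z)·k(|z|^α), and let h : ℝ → ℝ be the (principal-value) Hilbert transform of g. Then the limit lim_{z → 0} (h(z) − h(0))/|z|^α exists and equals cot(απ/2)·k'(0). -/
open MeasureTheory Filter

/-- `h` is the pointwise (principal-value) Hilbert transform of `f`. -/
def IsPVHilbert (f h : ℝ → ℝ) : Prop :=
  ∀ x : ℝ, Tendsto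
    (fun ε : ℝ => (Real.pi)⁻¹ * ∫ y in {y : ℝ | ε < |x - y|}, f y / (x - y))
    (nhdsWithin 0 (Set.Ioi 0)) (nhds (h x))

/-!
Writing `sgn(y) k(|y|^α) = y q(y)` with `q` even turns the Hilbert transform into
`h z = z (H q)(z) - π⁻¹ ∫ q`, so that `h z - h 0 = z (H q)(z)`. Subtracting from `q` a constant near
the singularity and dilating by `z` expresses `(h z - h 0) / |z|^α` as an absolutely convergent
integral which depends on `z` only through the rescaling `x ↦ k (l x) / l` of `k` at `l = |z|^α`.
Rescaling preserves the Lipschitz constant, which supplies a uniform integrable majorant, and tends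
to the linear function `x ↦ k'(0) x`. The limit is therefore `k'(0) / π` times the principal value
of `∫ |t|^(α - 1) / (1 - t) dt`. Folding the line onto `(0, 1)` by `t ↦ ±t^(±1)` makes this
`∫ 2 (t^(α - 1) - t^(1 - α)) / (1 - t²) dt` over `(0, 1)`; expanding `1 / (1 - t²)` geometrically
and integrating termwise gives the partial fraction expansion of `π cot(απ/2)`.
-/

open Set Topology
open scoped NNReal

section PrincipalValue

variable {f g q h : ℝ → ℝ} {c d x z : ℝ}

/-- The principal-value Hilbert transform of `f` exists at the point `x` and equals `c`. This is the
pointwise form of `IsPVHilbert`: the truncated integrals carry the same normalisation `1 / π`. -/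
def HasPVHilbertAt (f : ℝ → ℝ) (x c : ℝ) : Prop :=
  Tendsto (fun ε : ℝ => Real.pi⁻¹ * ∫ y in {y : ℝ | ε < |x - y|}, f y / (x - y)) (𝓝[>] 0) (𝓝 c)

lemma measurableSet_lt_abs_sub (x ε : ℝ) : MeasurableSet {y : ℝ | ε < |x - y|} :=
  measurableSet_lt measurable_const (by fun_prop)

lemma tendsto_setIntegral_lt_abs_sub {E : Type*} [NormedAddCommGroup E] [NormedSpace ℝ E]
    {f : ℝ → E} (hf : Integrable f) (x : ℝ) :
    Tendsto (fun ε : ℝ => ∫ y in {y : ℝ | ε < |x - y|}, f y) (𝓝[>] 0) (𝓝 (∫ y, f y)) := by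
  simp_rw [← integral_indicator (measurableSet_lt_abs_sub x _)]
  refine tendsto_integral_filter_of_dominated_convergence (fun y => ‖f y‖)
    (.of_forall fun ε => (hf.indicator (measurableSet_lt_abs_sub x ε)).aestronglyMeasurable)
    (.of_forall fun ε => .of_forall fun y => norm_indicator_le_norm_self _ _) hf.norm ?_
  filter_upwards [volume.ae_ne x] with y hy
  have hxy : 0 < |x - y| := abs_pos.2 (sub_ne_zero.2 hy.symm)
  refine tendsto_const_nhds.congr' ?_
  filter_upwards [nhdsWithin_le_nhds (Iio_mem_nhds hxy)] with ε hε
  exact (indicator_of_mem (s := {y | ε < |x - y|}) hε _).symm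

lemma integrableOn_div_sub (hf : Integrable f) (x : ℝ) {ε : ℝ} (hε : 0 < ε) :
    IntegrableOn (fun y => f y / (x - y)) {y : ℝ | ε < |x - y|} := by
  refine Integrable.mono' (hf.norm.div_const ε).integrableOn
    (hf.aestronglyMeasurable.restrict.div₀ (by fun_prop)) ?_
  refine ae_restrict_of_forall_mem (measurableSet_lt_abs_sub x ε) fun y hy => ?_
  rw [norm_div]
  gcongr
  exact hy.le

lemma HasPVHilbertAt.unique (hc : HasPVHilbertAt f x c) (hd : HasPVHilbertAt f x d) : c = d :=
  tendsto_nhds_unique hc hd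

lemma hasPVHilbertAt_of_integrable (hf : Integrable fun y => f y / (x - y)) :
    HasPVHilbertAt f x (Real.pi⁻¹ * ∫ y, f y / (x - y)) :=
  (tendsto_setIntegral_lt_abs_sub hf x).const_mul _

lemma HasPVHilbertAt.add (hf : Integrable f) (hg : Integrable g) (hc : HasPVHilbertAt f x c)
    (hd : HasPVHilbertAt g x d) : HasPVHilbertAt (fun y => f y + g y) x (c + d) := by
  refine (Tendsto.add hc hd).congr' ?_
  filter_upwards [self_mem_nhdsWithin] with ε hε
  simp_rw [add_div]
  rw [integral_add (integrableOn_div_sub hf x hε) (integrableOn_div_sub hg x hε), mul_add]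

lemma hasPVHilbertAt_zero_of_reflection_eq (hf : ∀ y, f (2 * x - y) = f y) :
    HasPVHilbertAt f x 0 := by
  suffices hzero : ∀ ε : ℝ, ∫ y in {y : ℝ | ε < |x - y|}, f y / (x - y) = 0 by
    simp only [HasPVHilbertAt, hzero, mul_zero, tendsto_const_nhds_iff]
  intro ε
  rw [← integral_indicator (measurableSet_lt_abs_sub x ε)]
  set φ : ℝ → ℝ := indicator {y | ε < |x - y|} fun y => f y / (x - y) with hφ
  have odd_about_x (y : ℝ) : φ (2 * x - y) = -φ y := by
    have hsub : x - (2 * x - y) = -(x - y) := by ring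
    simp only [hφ, indicator_apply, mem_ofPred_eq, hsub, abs_neg, hf, div_neg]
    split_ifs <;> simp
  have hreflect : ∫ y, φ (2 * x - y) = ∫ y, φ y := integral_sub_left_eq_self φ volume (2 * x)
  simp_rw [odd_about_x, integral_neg] at hreflect
  linarith

lemma HasPVHilbertAt.id_mul (hq : Integrable q) (hc : HasPVHilbertAt q x c) :
    HasPVHilbertAt (fun y => y * q y) x (x * c - Real.pi⁻¹ * ∫ y, q y) := by
  refine ((Tendsto.const_mul x hc).sub
    ((tendsto_setIntegral_lt_abs_sub hq x).const_mul Real.pi⁻¹)).congr' ?_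
  filter_upwards [self_mem_nhdsWithin] with ε hε
  have hsplit : ∫ y in {y | ε < |x - y|}, y * q y / (x - y)
      = ∫ y in {y | ε < |x - y|}, (x * (q y / (x - y)) - q y) := by
    refine setIntegral_congr_fun (measurableSet_lt_abs_sub x ε) fun y hy => ?_
    have hxy : x - y ≠ 0 := abs_pos.1 (lt_trans hε hy)
    field_simp
    ring
  rw [hsplit, integral_sub ((integrableOn_div_sub hq x hε).const_mul x) hq.integrableOn,
    integral_const_mul]
  ring

/-- The absolutely convergent integrand for the principal value of `∫ q y / (x - y) dy`: the
constant `q x`, whose principal value over an interval centred at `x` vanishes, is subtracted on the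
interval of radius `|x|`. This radius makes the integrand covariant under dilations. -/
noncomputable def pvIntegrand (q : ℝ → ℝ) (x y : ℝ) : ℝ :=
  (q y - (Metric.ball x |x|).indicator (fun _ => q x) y) / (x - y)

lemma pvIntegrand_const_mul (a : ℝ) (q : ℝ → ℝ) (x : ℝ) :
    pvIntegrand (fun t => a * q t) x = fun y => a * pvIntegrand q x y := by
  classical
  ext y
  simp only [pvIntegrand, indicator_apply]
  split_ifs <;> ring

lemma pvIntegrand_mul_left (q : ℝ → ℝ) (hz : z ≠ 0) (t : ℝ) :
    pvIntegrand q z (z * t) = z⁻¹ * pvIntegrand (fun t => q (z * t)) 1 t := by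
  classical
  have hball : z * t ∈ Metric.ball z |z| ↔ t ∈ Metric.ball 1 |1| := by
    have hfactor : z * t - z = z * (t - 1) := by ring
    simp [Real.dist_eq, hfactor, abs_mul, hz]
  simp only [pvIntegrand, indicator_apply, hball, mul_one]
  rw [show z - z * t = z * (1 - t) by ring, div_mul_eq_div_div_swap, div_eq_inv_mul]

lemma integral_pvIntegrand_eq (q : ℝ → ℝ) (hz : z ≠ 0) :
    z * ∫ y, pvIntegrand q z y = |z| * ∫ t, pvIntegrand (fun t => q (z * t)) 1 t := by
  have hscale := Measure.integral_comp_mul_left (pvIntegrand q z) z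
  simp_rw [pvIntegrand_mul_left q hz, integral_const_mul, abs_inv, smul_eq_mul] at hscale
  have hz' : |z| ≠ 0 := abs_ne_zero.2 hz
  field_simp at hscale
  linarith

lemma hasPVHilbertAt_integral_pvIntegrand (hq : Integrable q) (hi : Integrable (pvIntegrand q x)) :
    HasPVHilbertAt q x (Real.pi⁻¹ * ∫ y, pvIntegrand q x y) := by
  classical
  set b : ℝ → ℝ := (Metric.ball x |x|).indicator fun _ => q x with hb
  have hb_int : Integrable b :=
    (integrable_indicator_iff measurableSet_ball).2 (integrableOn_const measure_ball_lt_top.ne)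
  have hb_pv : HasPVHilbertAt b x 0 := by
    refine hasPVHilbertAt_zero_of_reflection_eq fun y => ?_
    have hdist : |2 * x - y - x| = |y - x| := by rw [abs_sub_comm y x]; congr 1; ring
    simp only [hb, indicator_apply, Metric.mem_ball, Real.dist_eq, hdist]
  have hsum := (hasPVHilbertAt_of_integrable hi).add (hq.sub hb_int) hb_int hb_pv
  simpa only [Pi.sub_apply, sub_add_cancel, add_zero, pvIntegrand] using hsum

lemma IsPVHilbert.sub_apply_zero (hq : Integrable q) (heven : ∀ y, q (-y) = q y)
    (hh : IsPVHilbert (fun y => y * q y) h) (hz : z ≠ 0)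
    (hi : Integrable (pvIntegrand (fun t => q (z * t)) 1)) :
    h z - h 0 = Real.pi⁻¹ * (|z| * ∫ t, pvIntegrand (fun t => q (z * t)) 1 t) := by
  have hi_z : Integrable (pvIntegrand q z) := by
    rw [← integrable_comp_mul_left_iff _ hz]
    simpa only [pvIntegrand_mul_left q hz] using hi.const_mul z⁻¹
  have hval : h z = z * (Real.pi⁻¹ * ∫ y, pvIntegrand q z y) - Real.pi⁻¹ * ∫ y, q y :=
    HasPVHilbertAt.unique (hh z) ((hasPVHilbertAt_integral_pvIntegrand hq hi_z).id_mul hq)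
  have hval_zero : h 0 = 0 * 0 - Real.pi⁻¹ * ∫ y, q y :=
    HasPVHilbertAt.unique (hh 0)
      ((hasPVHilbertAt_zero_of_reflection_eq fun y => by simpa using heven y).id_mul hq)
  rw [hval, hval_zero, ← integral_pvIntegrand_eq q hz]
  ring

end PrincipalValue

section Folding

variable {E : Type*} [NormedAddCommGroup E] [NormedSpace ℝ E] {f : ℝ → E}

/-- The density on `(0, 1)` obtained by pulling `f` back along `t`, `-t`, `t⁻¹` and `-t⁻¹`, each
with its Jacobian. It has the same integral over `(0, 1)` as `f` has over the real line. -/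
noncomputable def foldUnit (f : ℝ → E) (t : ℝ) : E :=
  f t + f (-t) + (t ^ 2)⁻¹ • (f t⁻¹ + f (-t⁻¹))

lemma integral_Ioi_zero_add_comp_neg (hf : Integrable f) :
    ∫ t in Ioi (0 : ℝ), (f t + f (-t)) = ∫ t, f t := by
  rw [integral_add hf.integrableOn hf.comp_neg.integrableOn, integral_comp_neg_Ioi, neg_zero,
    add_comm, intervalIntegral.integral_Iic_add_Ioi hf.integrableOn hf.integrableOn]

lemma image_inv_Ioo_zero_one : (fun t : ℝ => t⁻¹) '' Ioo 0 1 = Ioi 1 := by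
  rw [image_inv_eq_inv, inv_Ioo_0_left one_pos, inv_one]

lemma hasDerivWithinAt_inv_Ioo_zero_one (t : ℝ) (ht : t ∈ Ioo (0 : ℝ) 1) :
    HasDerivWithinAt (fun t : ℝ => t⁻¹) (-(t ^ 2)⁻¹) (Ioo 0 1) t :=
  (hasDerivAt_inv ht.1.ne').hasDerivWithinAt

lemma integrableOn_Ioo_inv_sq_smul_comp_inv (hf : IntegrableOn f (Ioi 1)) :
    IntegrableOn (fun t : ℝ => (t ^ 2)⁻¹ • f t⁻¹) (Ioo 0 1) := by
  rw [← image_inv_Ioo_zero_one, integrableOn_image_iff_integrableOn_abs_deriv_smul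
    measurableSet_Ioo hasDerivWithinAt_inv_Ioo_zero_one inv_injective.injOn] at hf
  simpa only [abs_neg, abs_inv, abs_sq] using hf

lemma integral_Ioo_inv_sq_smul_comp_inv (f : ℝ → E) :
    ∫ t in Ioo (0 : ℝ) 1, (t ^ 2)⁻¹ • f t⁻¹ = ∫ t in Ioi 1, f t := by
  rw [← image_inv_Ioo_zero_one, integral_image_eq_integral_abs_deriv_smul
    measurableSet_Ioo hasDerivWithinAt_inv_Ioo_zero_one inv_injective.injOn]
  simp_rw [abs_neg, abs_inv, abs_sq]

lemma integrableOn_foldUnit (hf : Integrable f) : IntegrableOn (foldUnit f) (Ioo 0 1) :=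
  have hadd : Integrable fun t => f t + f (-t) := hf.add hf.comp_neg
  hadd.integrableOn.add (integrableOn_Ioo_inv_sq_smul_comp_inv hadd.integrableOn)

lemma integral_foldUnit (hf : Integrable f) : ∫ t in Ioo (0 : ℝ) 1, foldUnit f t = ∫ t, f t := by
  have hadd : Integrable fun t => f t + f (-t) := hf.add hf.comp_neg
  calc ∫ t in Ioo (0 : ℝ) 1, foldUnit f t
      = (∫ t in Ioc (0 : ℝ) 1, (f t + f (-t))) + ∫ t in Ioi 1, (f t + f (-t)) := by
        rw [integral_Ioc_eq_integral_Ioo, ← integral_Ioo_inv_sq_smul_comp_inv]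
        exact integral_add hadd.integrableOn
          (integrableOn_Ioo_inv_sq_smul_comp_inv hadd.integrableOn)
    _ = ∫ t in Ioi (0 : ℝ), (f t + f (-t)) := by
        rw [← setIntegral_union (Ioc_disjoint_Ioi le_rfl) measurableSet_Ioi hadd.integrableOn
          hadd.integrableOn, Ioc_union_Ioi_eq_Ioi zero_le_one]
    _ = ∫ t, f t := integral_Ioi_zero_add_comp_neg hf

end Folding

section EvenIntegrand

variable {t : ℝ} {q : ℝ → ℝ}

/-- The cutoff term `𝟙_{(0, 2)}(t) / (1 - t)` of `pvIntegrand q 1`, folded onto `(0, 1)` as in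
`foldUnit`. For `t > 1 / 2` the branch `t⁻¹` contributes as well. -/
noncomputable def foldedCutoff (t : ℝ) : ℝ := if 1 / 2 < t then -t⁻¹ else (1 - t)⁻¹

lemma integrableOn_foldedCutoff : IntegrableOn foldedCutoff (Ioo 0 1) := by
  have hmeas : Measurable foldedCutoff :=
    Measurable.ite measurableSet_Ioi (by fun_prop) (by fun_prop)
  refine (integrableOn_const (C := (2 : ℝ)) measure_Ioo_lt_top.ne).mono' hmeas.aestronglyMeasurable
    (ae_restrict_of_forall_mem measurableSet_Ioo fun t ht => ?_)
  rw [foldedCutoff]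
  split_ifs with h
  · rw [norm_neg, norm_inv, Real.norm_of_nonneg ht.1.le]
    exact inv_le_of_inv_le₀ two_pos (by linarith)
  · rw [norm_inv, Real.norm_of_nonneg (by linarith [ht.2])]
    exact inv_le_of_inv_le₀ two_pos (by linarith)

lemma integral_foldedCutoff : ∫ t in Ioo (0 : ℝ) 1, foldedCutoff t = 0 := by
  have odd_about_half : ∀ᵐ t : ℝ, foldedCutoff (1 - t) = -foldedCutoff t := by
    filter_upwards [volume.ae_ne (1 / 2)] with t ht
    rcases ht.lt_or_gt with h | h
    · rw [foldedCutoff, foldedCutoff, if_pos (by linarith), if_neg (by linarith)]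
    · rw [foldedCutoff, foldedCutoff, if_neg (by linarith), if_pos h, sub_sub_cancel, neg_neg]
  have hreflect := intervalIntegral.integral_comp_sub_left (a := 0) (b := 1) foldedCutoff 1
  rw [intervalIntegral.integral_congr_ae (odd_about_half.mono fun t ht _ => ht),
    intervalIntegral.integral_neg, sub_self, sub_zero] at hreflect
  rw [← integral_Ioc_eq_integral_Ioo, ← intervalIntegral.integral_of_le zero_le_one]
  linarith

lemma foldUnit_pvIntegrand_one (hq : ∀ t, q (-t) = q t) (ht : t ∈ Ioo 0 1) :
    foldUnit (pvIntegrand q 1) t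
      = 2 * (q t - q t⁻¹) / (1 - t ^ 2) - q 1 * foldedCutoff t := by
  classical
  obtain ⟨hpos, hlt⟩ := ht
  have hball (s : ℝ) : s ∈ Metric.ball (1 : ℝ) |1| ↔ s ∈ Ioo 0 2 := by
    norm_num [Real.ball_eq_Ioo]
  have hmem : t ∈ Ioo 0 2 := ⟨hpos, by linarith⟩
  have hnotMem (s : ℝ) (hs : 0 < s) : -s ∉ Ioo 0 2 := fun h => by linarith [h.1]
  have hmem_inv : t⁻¹ ∈ Ioo 0 2 ↔ 1 / 2 < t := by
    rw [mem_Ioo, inv_lt_comm₀ hpos two_pos, one_div]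
    exact and_iff_right (inv_pos.2 hpos)
  have h_one_sub : 1 - t ≠ 0 := by linarith
  have h_one_add : 1 + t ≠ 0 := by linarith
  have h_one_sub_inv : 1 - t⁻¹ = -((1 - t) / t) := by field_simp; ring
  have h_one_add_inv : 1 - -t⁻¹ = (1 + t) / t := by field_simp; ring
  have h_one_sub_sq : 1 - t ^ 2 = (1 - t) * (1 + t) := by ring
  simp only [foldUnit, pvIntegrand, indicator_apply, hball, hq, hmem, hmem_inv, hnotMem t hpos,
    hnotMem t⁻¹ (inv_pos.2 hpos), if_true, if_false, foldedCutoff, h_one_sub_inv, h_one_add_inv,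
    h_one_sub_sq, sub_neg_eq_add, smul_eq_mul]
  split_ifs <;> field_simp <;> ring

lemma integrableOn_Ioo_sub_comp_inv_div_one_sub_sq (hq : ∀ t, q (-t) = q t)
    (hi : Integrable (pvIntegrand q 1)) :
    IntegrableOn (fun t => 2 * (q t - q t⁻¹) / (1 - t ^ 2)) (Ioo 0 1) := by
  refine ((integrableOn_foldUnit hi).add (integrableOn_foldedCutoff.const_mul (q 1))).congr_fun
    (fun t ht => ?_) measurableSet_Ioo
  rw [Pi.add_apply, foldUnit_pvIntegrand_one hq ht, sub_add_cancel]

lemma integral_pvIntegrand_one (hq : ∀ t, q (-t) = q t) (hi : Integrable (pvIntegrand q 1)) :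
    ∫ t, pvIntegrand q 1 t = ∫ t in Ioo (0 : ℝ) 1, 2 * (q t - q t⁻¹) / (1 - t ^ 2) := by
  rw [← integral_foldUnit hi,
    setIntegral_congr_fun measurableSet_Ioo fun t ht => foldUnit_pvIntegrand_one hq ht,
    integral_sub (integrableOn_Ioo_sub_comp_inv_div_one_sub_sq hq hi)
      (integrableOn_foldedCutoff.const_mul _),
    integral_const_mul, integral_foldedCutoff, mul_zero, sub_zero]

end EvenIntegrand

section RealPower

variable {α t : ℝ}

lemma tendsto_abs_rpow_nhdsNE_zero (hα : 0 < α) :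
    Tendsto (fun z : ℝ => |z| ^ α) (𝓝[≠] 0) (𝓝[>] 0) := by
  refine tendsto_nhdsWithin_iff.2 ⟨?_, ?_⟩
  · refine (Continuous.tendsto' (continuous_abs.rpow_const fun _ => .inr hα.le) 0 0 ?_).mono_left
      nhdsWithin_le_nhds
    rw [abs_zero, Real.zero_rpow hα.ne']
  · filter_upwards [self_mem_nhdsWithin] with z hz using Real.rpow_pos_of_pos (abs_pos.2 hz) α

lemma abs_rpow_sub_one_le (hα : 0 ≤ α) (hα1 : α ≤ 1) (ht : 0 < t) : |t ^ α - 1| ≤ |t - 1| := by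
  rcases le_total t 1 with h | h
  · have hupper : t ^ α ≤ 1 := Real.rpow_le_one ht.le h hα
    have hlower : t ^ (1 : ℝ) ≤ t ^ α := Real.rpow_le_rpow_of_exponent_ge ht h hα1
    rw [Real.rpow_one] at hlower
    rw [abs_of_nonpos (by linarith), abs_of_nonpos (by linarith)]
    linarith
  · have hlower : 1 ≤ t ^ α := Real.one_le_rpow h hα
    have hupper : t ^ α ≤ t ^ (1 : ℝ) := Real.rpow_le_rpow_of_exponent_le h hα1
    rw [Real.rpow_one] at hupper
    rw [abs_of_nonneg (by linarith), abs_of_nonneg (by linarith)]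
    linarith

lemma one_le_two_mul_rpow_sub_one (hα : 0 ≤ α) (hα1 : α ≤ 1) (ht : 0 < t) (ht2 : t ≤ 2) :
    1 ≤ 2 * t ^ (α - 1) := by
  calc (1 : ℝ) ≤ 2 ^ α := Real.one_le_rpow one_le_two hα
    _ = 2 * 2 ^ (α - 1) := by rw [Real.rpow_sub_one two_ne_zero]; ring
    _ ≤ 2 * t ^ (α - 1) := by
      gcongr 2 * ?_
      exact Real.rpow_le_rpow_of_nonpos ht ht2 (by linarith)

lemma integrable_comp_abs {E : Type*} [NormedAddCommGroup E] {f : ℝ → E}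
    (hf : IntegrableOn f (Ioi 0)) : Integrable fun x => f |x| := by
  have hpos : Integrable ((Ioi 0).indicator f) := (integrable_indicator_iff measurableSet_Ioi).2 hf
  refine (hpos.add hpos.comp_neg).congr ?_
  filter_upwards [volume.ae_ne 0] with x hx
  rcases hx.lt_or_gt with hx | hx
  · simp [hx, hx.le, abs_of_neg]
  · simp [hx, hx.le, abs_of_pos]

lemma integrable_rpow_abs_div_one_add_abs (hα : 0 < α) (hα1 : α < 1) :
    Integrable fun t : ℝ => |t| ^ (α - 1) / (1 + |t|) := by
  have hcont : ContinuousOn (fun t : ℝ => (1 + t)⁻¹) (Ioi 0) :=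
    ContinuousOn.inv₀ (by fun_prop) fun t ht => by have : 0 < t := ht; positivity
  have hle (t : ℝ) (ht : 0 < t) : ‖(1 + t)⁻¹‖ ≤ 1 := by
    rw [Real.norm_of_nonneg (by positivity)]
    exact inv_le_one_of_one_le₀ (by linarith)
  have hle_inv (t : ℝ) (ht : 0 < t) : ‖(1 + t)⁻¹‖ ≤ ‖t ^ (-1 : ℝ)‖ := by
    rw [Real.rpow_neg_one, Real.norm_of_nonneg (by positivity), Real.norm_of_nonneg (by positivity)]
    gcongr
    linarith
  refine integrable_comp_abs (f := fun t => t ^ (α - 1) / (1 + t)) ?_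
  refine mellin_convergent_of_isBigO_scalar (a := 1) (b := 0) (hcont.locallyIntegrableOn
    measurableSet_Ioi) (.of_bound' ?_) hα1 (.of_bound' ?_) hα
  · filter_upwards [eventually_gt_atTop 0] with t ht using hle_inv t ht
  · filter_upwards [self_mem_nhdsWithin] with t ht
    simpa using hle t ht

end RealPower

section CotangentIntegral

variable {α a r t : ℝ}

lemma hasSum_cot_partial_fractions (ha : (a : ℂ) ∈ Complex.integerComplement) :
    HasSum (fun n : ℕ => 1 / (a - (n + 1)) + 1 / (a + (n + 1)))
      (Real.pi * Real.cot (Real.pi * a) - 1 / a) := by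
  have hsum := (summable_cotTerm ha).hasSum
  rw [← cot_series_rep' ha] at hsum
  rw [← Complex.hasSum_ofReal]
  push_cast
  exact hsum

lemma integrableOn_Ioo_zero_one_rpow (hr : -1 < r) :
    IntegrableOn (fun t : ℝ => t ^ r) (Ioo 0 1) :=
  (intervalIntegral.integrableOn_Ioo_rpow_iff one_pos).2 hr

lemma integral_Ioo_zero_one_rpow (hr : -1 < r) : ∫ t in Ioo (0 : ℝ) 1, t ^ r = 1 / (r + 1) := by
  rw [← integral_Ioc_eq_integral_Ioo, ← intervalIntegral.integral_of_le zero_le_one,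
    integral_rpow (.inl hr), Real.one_rpow, Real.zero_rpow (by linarith), sub_zero]

lemma integral_two_mul_rpow_sub_rpow (hα : 0 < α) (hα2 : α < 2) (n : ℕ) :
    ∫ t in Ioo (0 : ℝ) 1, 2 * (t ^ (2 * n + 1 + α) - t ^ (2 * n + 1 - α))
      = 1 / (α / 2 - (n + 1)) + 1 / (α / 2 + (n + 1)) := by
  have : (0 : ℝ) ≤ n := n.cast_nonneg
  have hupper : -1 < 2 * n + 1 + α := by linarith
  have hlower : -1 < 2 * n + 1 - α := by linarith
  have : α / 2 - (n + 1) ≠ 0 := by linarith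
  have : α / 2 + (n + 1) ≠ 0 := by linarith
  rw [integral_const_mul, integral_sub (integrableOn_Ioo_zero_one_rpow hupper)
    (integrableOn_Ioo_zero_one_rpow hlower), integral_Ioo_zero_one_rpow hupper,
    integral_Ioo_zero_one_rpow hlower,
    show 2 * n + 1 + α + 1 = 2 * (α / 2 + (n + 1)) by ring,
    show 2 * n + 1 - α + 1 = -2 * (α / 2 - (n + 1)) by ring]
  field_simp
  ring

lemma hasSum_two_mul_rpow_sub_rpow (α : ℝ) (ht : t ∈ Ioo 0 1) :
    HasSum (fun n : ℕ => 2 * (t ^ (2 * n + 1 + α) - t ^ (2 * n + 1 - α)))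
      (2 * (t ^ (1 + α) - t ^ (1 - α)) / (1 - t ^ 2)) := by
  have hsq : t ^ 2 < 1 := by nlinarith [ht.1, ht.2]
  refine ((hasSum_geometric_of_lt_one (sq_nonneg t) hsq).mul_left _).congr_fun fun n => ?_
  rw [show 2 * (n : ℝ) + 1 + α = (1 + α) + (2 * n : ℕ) by push_cast; ring,
    show 2 * (n : ℝ) + 1 - α = (1 - α) + (2 * n : ℕ) by push_cast; ring,
    Real.rpow_add_natCast ht.1.ne', Real.rpow_add_natCast ht.1.ne', pow_mul]
  ring

lemma integral_two_mul_rpow_sub_rpow_div_one_sub_sq (hα : 0 < α) (hα2 : α < 2) :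
    ∫ t in Ioo (0 : ℝ) 1, 2 * (t ^ (1 + α) - t ^ (1 - α)) / (1 - t ^ 2)
      = Real.pi * Real.cot (α * Real.pi / 2) - 2 / α := by
  set F : ℕ → ℝ → ℝ := fun n t => 2 * (t ^ (2 * n + 1 + α) - t ^ (2 * n + 1 - α))
  have hF_int (n : ℕ) : IntegrableOn (F n) (Ioo 0 1) := by
    have : (0 : ℝ) ≤ n := n.cast_nonneg
    exact ((integrableOn_Ioo_zero_one_rpow (by linarith)).sub
      (integrableOn_Ioo_zero_one_rpow (by linarith))).const_mul 2
  have hF_norm (n : ℕ) : ∫ t in Ioo (0 : ℝ) 1, ‖F n t‖ = -∫ t in Ioo (0 : ℝ) 1, F n t := by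
    rw [← integral_neg]
    refine setIntegral_congr_fun measurableSet_Ioo fun t ht => Real.norm_of_nonpos ?_
    have hle : t ^ (2 * n + 1 + α) ≤ t ^ (2 * n + 1 - α) :=
      Real.rpow_le_rpow_of_exponent_ge ht.1 ht.2.le (by linarith)
    linarith
  have hcot : HasSum (fun n => ∫ t in Ioo (0 : ℝ) 1, F n t)
      (Real.pi * Real.cot (Real.pi * (α / 2)) - 1 / (α / 2)) := by
    simp_rw [F, integral_two_mul_rpow_sub_rpow hα hα2]
    refine hasSum_cot_partial_fractions ?_
    rintro ⟨n, hn⟩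
    have hn' : (n : ℝ) = α / 2 := by exact_mod_cast hn
    have hpos : (0 : ℝ) < n := by linarith
    have hlt : (n : ℝ) < 1 := by linarith
    norm_cast at hpos hlt
    lia
  have hsum := hasSum_integral_of_summable_integral_norm hF_int
    (by simpa only [hF_norm] using hcot.summable.neg)
  calc ∫ t in Ioo (0 : ℝ) 1, 2 * (t ^ (1 + α) - t ^ (1 - α)) / (1 - t ^ 2)
      = ∫ t in Ioo (0 : ℝ) 1, ∑' n, F n t := setIntegral_congr_fun measurableSet_Ioo
        fun t ht => (hasSum_two_mul_rpow_sub_rpow α ht).tsum_eq.symm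
    _ = Real.pi * Real.cot (Real.pi * (α / 2)) - 1 / (α / 2) := hsum.unique hcot
    _ = Real.pi * Real.cot (α * Real.pi / 2) - 2 / α := by
      rw [one_div_div, mul_comm α, mul_div_assoc]

end CotangentIntegral

section Profile

variable {α k' l t x z : ℝ} {k : ℝ → ℝ} {K : ℝ≥0}

/-- The even function `q` with `sgn(y) k(|y|^α) = y q(y)`. -/
noncomputable def profile (k : ℝ → ℝ) (α y : ℝ) : ℝ := k (|y| ^ α) / |y|

/-- The difference-quotient rescaling `x ↦ k (l x) / l`, which preserves Lipschitz constants and, if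
`k 0 = 0`, converges to the linear part of `k` as `l → 0⁺`. -/
noncomputable def rescale (k : ℝ → ℝ) (l x : ℝ) : ℝ := l⁻¹ * k (l * x)

lemma sign_mul_eq_mul_profile (k : ℝ → ℝ) (α y : ℝ) :
    Real.sign y * k (|y| ^ α) = y * profile k α y := by
  rcases lt_trichotomy y 0 with hy | rfl | hy
  · have := hy.ne
    rw [profile, Real.sign_of_neg hy, abs_of_neg hy]
    field_simp
  · simp
  · rw [profile, Real.sign_of_pos hy, abs_of_pos hy]
    field_simp

lemma profile_neg (k : ℝ → ℝ) (α y : ℝ) : profile k α (-y) = profile k α y := by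
  simp only [profile, abs_neg]

lemma profile_mul_left (k : ℝ → ℝ) (α : ℝ) (hz : z ≠ 0) (t : ℝ) :
    profile k α (z * t) = |z| ^ α / |z| * profile (rescale k (|z| ^ α)) α t := by
  have hl : |z| ^ α ≠ 0 := (Real.rpow_pos_of_pos (abs_pos.2 hz) α).ne'
  rw [profile, profile, rescale, abs_mul, Real.mul_rpow (abs_nonneg _) (abs_nonneg _)]
  field_simp

lemma profile_id_eq_rpow (hα : α ≠ 1) : profile id α = fun t => |t| ^ (α - 1) := by
  ext t
  rcases eq_or_ne t 0 with rfl | ht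
  · simp [profile, Real.zero_rpow (sub_ne_zero.2 hα)]
  · rw [profile, id, Real.rpow_sub_one (abs_ne_zero.2 ht)]

lemma measurable_profile (hk : ContinuousOn k (Ici 0)) (hα : 0 ≤ α) :
    Measurable (profile k α) := by
  have hpow : Continuous fun y : ℝ => |y| ^ α := continuous_abs.rpow_const fun _ => .inr hα
  have hnonneg (y : ℝ) : |y| ^ α ∈ Ici 0 := Real.rpow_nonneg (abs_nonneg y) α
  exact (hk.comp_continuous hpow hnonneg).measurable.div continuous_abs.measurable

lemma rescale_zero (hk0 : k 0 = 0) (l : ℝ) : rescale k l 0 = 0 := by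
  simp only [rescale, mul_zero, hk0]

lemma lipschitzOnWith_rescale (hk : LipschitzOnWith K k (Ici 0)) (hl : 0 < l) :
    LipschitzOnWith K (rescale k l) (Ici 0) := by
  refine LipschitzOnWith.of_dist_le_mul fun a ha b hb => ?_
  have hdist := hk.dist_le_mul (l * a) (mul_nonneg hl.le ha) (l * b) (mul_nonneg hl.le hb)
  simp only [Real.dist_eq, rescale, ← mul_sub, abs_mul, abs_inv, abs_of_pos hl] at hdist ⊢
  rw [inv_mul_le_iff₀ hl]
  linarith

lemma tendsto_rescale (hk0 : k 0 = 0) (hk' : HasDerivWithinAt k k' (Ioi 0) 0) (hx : 0 < x) :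
    Tendsto (fun l => rescale k l x) (𝓝[>] 0) (𝓝 (x * k')) := by
  have hscale : Tendsto (fun l => l * x) (𝓝[>] 0) (𝓝[>] 0) := by
    refine tendsto_nhdsWithin_iff.2 ⟨?_, ?_⟩
    · exact (Continuous.tendsto' (by fun_prop) 0 0 (zero_mul x)).mono_left nhdsWithin_le_nhds
    · filter_upwards [self_mem_nhdsWithin] with l hl using mul_pos hl hx
  have hslope := (hasDerivWithinAt_iff_tendsto_slope' self_notMem_Ioi).1 hk'
  refine ((hslope.comp hscale).const_mul x).congr fun l => ?_
  simp only [Function.comp_apply, slope_def_field, hk0, sub_zero, rescale]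
  field_simp

lemma tendsto_profile_rescale (hk0 : k 0 = 0) (hk' : HasDerivWithinAt k k' (Ioi 0) 0)
    (ht : t ≠ 0) :
    Tendsto (fun l => profile (rescale k l) α t) (𝓝[>] 0) (𝓝 (k' * profile id α t)) := by
  have hpow : 0 < |t| ^ α := Real.rpow_pos_of_pos (abs_pos.2 ht) α
  have hlim := (tendsto_rescale hk0 hk' hpow).div_const |t|
  rwa [mul_comm, mul_div_assoc] at hlim

lemma abs_profile_le (hk : LipschitzOnWith K k (Ici 0)) (hk0 : k 0 = 0) (α t : ℝ) :
    |profile k α t| ≤ K * |t| ^ (α - 1) := by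
  rcases eq_or_ne t 0 with rfl | ht
  · simp only [profile, abs_zero, div_zero]
    positivity
  have hpow : 0 ≤ |t| ^ α := by positivity
  have hlip := hk.dist_le_mul _ hpow 0 self_mem_Ici
  rw [Real.dist_eq, Real.dist_eq, hk0, sub_zero, sub_zero, abs_of_nonneg hpow] at hlip
  rw [profile, abs_div, abs_abs, Real.rpow_sub_one (abs_ne_zero.2 ht), ← mul_div_assoc]
  gcongr

lemma abs_profile_sub_profile_one_le (hk : LipschitzOnWith K k (Ici 0)) (hk0 : k 0 = 0)
    (hα : 0 ≤ α) (hα1 : α ≤ 1) (ht : 0 < t) :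
    |profile k α t - profile k α 1| ≤ K * (t ^ (α - 1) + 1) * |1 - t| := by
  have hsplit : profile k α t - profile k α 1
      = profile k α t * (1 - t) + (k (t ^ α) - k 1) := by
    simp only [profile, abs_of_pos ht, abs_one, Real.one_rpow]
    field_simp
    ring
  have hprofile : |profile k α t| ≤ K * t ^ (α - 1) := by
    simpa only [abs_of_pos ht] using abs_profile_le hk hk0 α t
  have hlip : |k (t ^ α) - k 1| ≤ K * |1 - t| := by
    refine (hk.dist_le_mul _ (Real.rpow_nonneg ht.le α) 1 (mem_Ici.2 zero_le_one)).trans ?_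
    rw [Real.dist_eq, abs_sub_comm 1 t]
    gcongr K * ?_
    exact abs_rpow_sub_one_le hα hα1 ht
  calc |profile k α t - profile k α 1|
      ≤ |profile k α t| * |1 - t| + |k (t ^ α) - k 1| := by
        rw [hsplit, ← abs_mul]; exact abs_add_le _ _
    _ ≤ K * t ^ (α - 1) * |1 - t| + K * |1 - t| := by gcongr
    _ = K * (t ^ (α - 1) + 1) * |1 - t| := by ring

lemma abs_pvIntegrand_profile_le (hk : LipschitzOnWith K k (Ici 0)) (hk0 : k 0 = 0)
    (hα : 0 ≤ α) (hα1 : α ≤ 1) (t : ℝ) :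
    |pvIntegrand (profile k α) 1 t| ≤ 9 * K * (|t| ^ (α - 1) / (1 + |t|)) := by
  rw [pvIntegrand, abs_div, abs_one, ← mul_div_assoc, le_div_iff₀ (by positivity)]
  by_cases h : t ∈ Metric.ball (1 : ℝ) 1
  · obtain ⟨ht, ht2⟩ : 0 < t ∧ t < 2 := by
      rw [Metric.mem_ball, Real.dist_eq, abs_lt] at h
      constructor <;> linarith
    have hquot : |profile k α t - profile k α 1| / |1 - t| ≤ K * (t ^ (α - 1) + 1) :=
      div_le_of_le_mul₀ (abs_nonneg _) (by positivity)
        (abs_profile_sub_profile_one_le hk hk0 hα hα1 ht)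
    have hone := one_le_two_mul_rpow_sub_one hα hα1 ht ht2.le
    rw [indicator_of_mem h, abs_of_pos ht]
    calc |profile k α t - profile k α 1| / |1 - t| * (1 + t)
        ≤ K * (t ^ (α - 1) + 1) * (1 + t) := by gcongr
      _ ≤ K * (t ^ (α - 1) + 2 * t ^ (α - 1)) * (1 + 2) := by gcongr
      _ = 9 * K * t ^ (α - 1) := by ring
  · have hdist : 1 ≤ |1 - t| := by
      rwa [Metric.mem_ball, not_lt, dist_comm, Real.dist_eq] at h
    have habs : 1 + |t| ≤ 3 * |1 - t| := by
      have := abs_sub_abs_le_abs_sub t 1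
      rw [abs_one, abs_sub_comm] at this
      linarith
    rw [indicator_of_notMem h, sub_zero]
    calc |profile k α t| / |1 - t| * (1 + |t|)
        ≤ K * |t| ^ (α - 1) / |1 - t| * (3 * |1 - t|) := by
          gcongr
          exact abs_profile_le hk hk0 α t
      _ = 3 * K * |t| ^ (α - 1) := by field_simp
      _ ≤ 9 * K * |t| ^ (α - 1) := by gcongr; norm_num

lemma integrable_pvIntegrand_profile (hk : LipschitzOnWith K k (Ici 0)) (hk0 : k 0 = 0)
    (hα : 0 < α) (hα1 : α < 1) : Integrable (pvIntegrand (profile k α) 1) := by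
  have hmeas : Measurable (pvIntegrand (profile k α) 1) :=
    ((measurable_profile hk.continuousOn hα.le).sub
      (measurable_const.indicator measurableSet_ball)).div (by fun_prop)
  exact ((integrable_rpow_abs_div_one_add_abs hα hα1).const_mul (9 * K)).mono'
    hmeas.aestronglyMeasurable (.of_forall (abs_pvIntegrand_profile_le hk hk0 hα.le hα1.le))

lemma tendsto_integral_pvIntegrand_rescale (hk : LipschitzOnWith K k (Ici 0)) (hk0 : k 0 = 0)
    (hk' : HasDerivWithinAt k k' (Ioi 0) 0) (hα : 0 < α) (hα1 : α < 1) :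
    Tendsto (fun l => ∫ t, pvIntegrand (profile (rescale k l) α) 1 t) (𝓝[>] 0)
      (𝓝 (k' * ∫ t, pvIntegrand (profile id α) 1 t)) := by
  rw [← integral_const_mul]
  refine tendsto_integral_filter_of_dominated_convergence
    (fun t => 9 * K * (|t| ^ (α - 1) / (1 + |t|))) ?_ ?_
    ((integrable_rpow_abs_div_one_add_abs hα hα1).const_mul _) ?_
  · filter_upwards [self_mem_nhdsWithin] with l hl
    exact (integrable_pvIntegrand_profile (lipschitzOnWith_rescale hk hl) (rescale_zero hk0 l)
      hα hα1).aestronglyMeasurable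
  · filter_upwards [self_mem_nhdsWithin] with l hl
    exact .of_forall (abs_pvIntegrand_profile_le (lipschitzOnWith_rescale hk hl)
      (rescale_zero hk0 l) hα.le hα1.le)
  · classical
    filter_upwards [volume.ae_ne 0] with t ht
    have hlim_t := tendsto_profile_rescale (α := α) hk0 hk' ht
    have hlim_one := tendsto_profile_rescale (α := α) hk0 hk' one_ne_zero
    rw [← congrFun (pvIntegrand_const_mul k' (profile id α) 1) t]
    simp only [pvIntegrand, indicator_apply]
    split_ifs
    · exact (hlim_t.sub hlim_one).div_const _
    · exact (hlim_t.sub_const 0).div_const _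

lemma integrable_profile (hk : LipschitzOnWith K k (Ici 0)) (hk0 : k 0 = 0) (hα : α ≠ 0)
    (hint : IntegrableOn (fun x => k x / x) (Ioi 1)) : Integrable (profile k α) := by
  have hbounded : IntegrableOn (fun x => k x / x) (Ioc 0 1) := by
    have hmeas : AEStronglyMeasurable (fun x => k x / x) (volume.restrict (Ioc 0 1)) :=
      ((hk.continuousOn.mono fun x hx => hx.1.le).aestronglyMeasurable measurableSet_Ioc).div₀
        (by fun_prop)
    refine (integrableOn_const (C := (K : ℝ)) measure_Ioc_lt_top.ne).mono' hmeas ?_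
    refine ae_restrict_of_forall_mem measurableSet_Ioc fun x hx => ?_
    have hle := abs_profile_le hk hk0 1 x
    simpa only [profile, Real.rpow_one, abs_of_pos hx.1, sub_self, Real.rpow_zero, mul_one,
      Real.norm_eq_abs] using hle
  have hpos : IntegrableOn (fun x => k x / x) (Ioi 0) := by
    rw [← Ioc_union_Ioi_eq_Ioi zero_le_one]
    exact hbounded.union hint
  refine integrable_comp_abs (f := fun y => k (y ^ α) / y) ?_
  refine ((integrableOn_Ioi_comp_rpow_iff' _ hα).2 hpos).congr_fun (fun y hy => ?_)
    measurableSet_Ioi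
  have hy' : 0 < y := hy
  simp only [smul_eq_mul, Real.rpow_sub_one hy'.ne']
  field_simp

lemma integral_pvIntegrand_profile_id (hα : 0 < α) (hα1 : α < 1) :
    ∫ t, pvIntegrand (profile id α) 1 t = Real.pi * Real.cot (α * Real.pi / 2) := by
  have hi : Integrable (pvIntegrand (profile id α) 1) :=
    integrable_pvIntegrand_profile LipschitzWith.id.lipschitzOnWith rfl hα hα1
  have hsplit : EqOn
      (fun t : ℝ => 2 * (profile id α t - profile id α t⁻¹) / (1 - t ^ 2) - 2 * t ^ (α - 1))
      (fun t => 2 * (t ^ (1 + α) - t ^ (1 - α)) / (1 - t ^ 2)) (Ioo 0 1) := by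
    intro t ht
    have hinv : |t⁻¹| ^ (α - 1) = t ^ (1 - α) := by
      rw [abs_inv, abs_of_pos ht.1, Real.inv_rpow ht.1.le, ← Real.rpow_neg ht.1.le, neg_sub]
    have hsq : t ^ (1 + α) = t ^ (α - 1) * t ^ 2 := by
      rw [← Real.rpow_add_natCast ht.1.ne']
      push_cast
      ring_nf
    have hden : 1 - t ^ 2 ≠ 0 := by nlinarith [ht.1, ht.2]
    simp only [profile_id_eq_rpow hα1.ne, hinv, abs_of_pos ht.1, hsq]
    field_simp
    ring
  have hpow : -1 < α - 1 := by linarith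
  have hcot := integral_two_mul_rpow_sub_rpow_div_one_sub_sq hα (by linarith)
  rw [← setIntegral_congr_fun measurableSet_Ioo hsplit, integral_sub
    (integrableOn_Ioo_sub_comp_inv_div_one_sub_sq (profile_neg id α) hi)
    ((integrableOn_Ioo_zero_one_rpow hpow).const_mul 2),
    ← integral_pvIntegrand_one (profile_neg id α) hi, integral_const_mul,
    integral_Ioo_zero_one_rpow hpow, sub_add_cancel, mul_one_div] at hcot
  linarith

end Profile

section Asymptotics

variable {α k' z : ℝ} {k h : ℝ → ℝ} {K : ℝ≥0}

lemma IsPVHilbert.sub_div_rpow_eq_integral (hα : 0 < α) (hα1 : α < 1)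
    (hk : LipschitzOnWith K k (Ici 0)) (hk0 : k 0 = 0)
    (hint : IntegrableOn (fun x => k x / x) (Ioi 1))
    (hh : IsPVHilbert (fun z => Real.sign z * k (|z| ^ α)) h) (hz : z ≠ 0) :
    (h z - h 0) / |z| ^ α
      = Real.pi⁻¹ * ∫ t, pvIntegrand (profile (rescale k (|z| ^ α)) α) 1 t := by
  have hl : 0 < |z| ^ α := Real.rpow_pos_of_pos (abs_pos.2 hz) α
  have hz' : |z| ≠ 0 := abs_ne_zero.2 hz
  have hdilate : pvIntegrand (fun t => profile k α (z * t)) 1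
      = fun t => |z| ^ α / |z| * pvIntegrand (profile (rescale k (|z| ^ α)) α) 1 t := by
    simp_rw [profile_mul_left k α hz, pvIntegrand_const_mul]
  have hi : Integrable (pvIntegrand (fun t => profile k α (z * t)) 1) := by
    rw [hdilate]
    exact (integrable_pvIntegrand_profile (lipschitzOnWith_rescale hk hl) (rescale_zero hk0 _)
      hα hα1).const_mul _
  simp_rw [sign_mul_eq_mul_profile] at hh
  rw [hh.sub_apply_zero (integrable_profile hk hk0 hα.ne' hint) (profile_neg k α) hz hi, hdilate,
    integral_const_mul]
  field_simp

theorem hilbert_holder_asymptotics_general (hα : 0 < α) (hα1 : α < 1)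
    (hk : LipschitzOnWith K k (Ici 0)) (hk0 : k 0 = 0) (hk' : HasDerivWithinAt k k' (Ioi 0) 0)
    (hint : IntegrableOn (fun x => k x / x) (Ioi 1))
    (hh : IsPVHilbert (fun z => Real.sign z * k (|z| ^ α)) h) :
    Tendsto (fun z => (h z - h 0) / |z| ^ α) (𝓝[≠] 0) (𝓝 (Real.cot (α * Real.pi / 2) * k')) := by
  have hlim := ((tendsto_integral_pvIntegrand_rescale hk hk0 hk' hα hα1).comp
    (tendsto_abs_rpow_nhdsNE_zero hα)).const_mul Real.pi⁻¹
  have hconst : Real.pi⁻¹ * (k' * ∫ t, pvIntegrand (profile id α) 1 t)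
      = Real.cot (α * Real.pi / 2) * k' := by
    rw [integral_pvIntegrand_profile_id hα hα1]
    field_simp
  rw [hconst] at hlim
  refine hlim.congr' ?_
  filter_upwards [self_mem_nhdsWithin] with z hz
  exact (hh.sub_div_rpow_eq_integral hα hα1 hk hk0 hint hz).symm

lemma integrableOn_Ioi_one_div_id (hk : IntegrableOn k (Ioi 1)) :
    IntegrableOn (fun x => k x / x) (Ioi 1) := by
  refine hk.norm.mono' (hk.aestronglyMeasurable.div₀ (by fun_prop))
    (ae_restrict_of_forall_mem measurableSet_Ioi fun x hx => ?_)
  rw [norm_div]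
  exact div_le_self (norm_nonneg _) (hx.le.trans (le_abs_self x))

end Asymptotics

/-- Behaviour of the Hilbert transform of `sgn(z)·k(|z|^α)` near the origin. -/
theorem hilbert_holder_asymptotics (α : ℝ) (hα : 0 < α) (hα1 : α < 1)
    (k : ℝ → ℝ) (hk : ContDiff ℝ (⊤ : ℕ∞) k) (hksupp : HasCompactSupport k) (hk0 : k 0 = 0)
    (h : ℝ → ℝ)
    (hHT : IsPVHilbert (fun z : ℝ => Real.sign z * k (|z| ^ α)) h) :
    Tendsto (fun z : ℝ => (h z - h 0) / |z| ^ α)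
      (nhdsWithin 0 {(0 : ℝ)}ᶜ)
      (nhds (Real.cot (α * Real.pi / 2) * deriv k 0)) := by
  obtain ⟨K, hK⟩ := hk.lipschitzWith_of_hasCompactSupport hksupp (by simp)
  exact hilbert_holder_asymptotics_general hα hα1 hK.lipschitzOnWith hk0
    (hk.differentiable (by simp) 0).hasDerivAt.hasDerivWithinAt
    (integrableOn_Ioi_one_div_id
      (hk.continuous.integrable_of_hasCompactSupport hksupp).integrableOn) hHT
end

section
/- For every 0 < α < 1, the principal value integral of 1/((1−z)|z|^{1−α}) over the real line equals π·cot(απ/2); that is, lim_{ε → 0⁺} ∫_{{z ∈ ℝ : |z − 1| > ε}} |z|^{α−1}/(1 − z) dz = π·cot(απ/2). (The integrand is absolutely integrable near z = 0 and near infinity since 0 < α < 1, so only the singularity at z = 1 requires a principal value.) -/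
open MeasureTheory Filter

open Set Real Topology Asymptotics

/-!
Fold the real line onto `(0, 1)` by `z ↦ -z` and `z ↦ 1 / z`. The negative half-line contributes
`(z ^ (α - 1) + z ^ (-α)) / (1 + z)` and the positive one `(z ^ (α - 1) - z ^ (-α)) / (1 - z)`,
whose singularity at `1` is removable. The only trace of the truncation is that inversion sends
`1 + ε` to `(1 + ε)⁻¹` instead of `1 - ε`. The two contributions add up to
`2 * (z ^ (α - 1) - z ^ (1 - α)) / (1 - z ^ 2)`; integrating its geometric expansion termwise gives
the Mittag-Leffler series `∑ (1 / (α / 2 + n) - 1 / (n + 1 - α / 2))` of `π * cot (π * α / 2)`.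
-/

section CotangentSeries

theorem hasSum_one_div_add_sub_one_div_add_one {x : ℂ} (hx : ∀ n : ℕ, x + n ≠ 0) :
    HasSum (fun n : ℕ => 1 / (x + n) - 1 / (x + n + 1)) (1 / x) := by
  have hsummable : Summable fun n : ℕ => 1 / (x + n) - 1 / (x + n + 1) := by
    have h := (EisensteinSeries.summable_linear_right_add_one_mul_linear_right x 1 1).comp_injective
      (CharZero.cast_injective (R := ℤ))
    refine h.congr fun n => ?_
    have hn := hx n
    have hn' : x + n + 1 ≠ 0 := by simpa [add_assoc] using hx (n + 1)
    simp only [Function.comp_apply, Int.cast_one, one_mul, Int.cast_natCast]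
    field_simp
    ring
  have hlim : Tendsto (fun n : ℕ => 1 / (x + n)) atTop (𝓝 0) := by
    simp only [one_div]
    exact tendsto_inv₀_cobounded.comp
      ((tendsto_const_add_cobounded x).comp tendsto_natCast_atTop_cobounded)
  have hpartial (n : ℕ) :
      ∑ k ∈ Finset.range n, (1 / (x + k) - 1 / (x + k + 1)) = 1 / x - 1 / (x + n) := by
    simpa [add_assoc] using Finset.sum_range_sub' (fun n : ℕ => 1 / (x + n)) n
  rw [hsummable.hasSum_iff_tendsto_nat, funext hpartial]
  simpa using hlim.const_sub (1 / x)

theorem hasSum_pi_mul_cot_complex {x : ℂ} (hx : x ∈ Complex.integerComplement) :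
    HasSum (fun n : ℕ => 1 / (x + n) - 1 / (n + 1 - x)) (π * Complex.cot (π * x)) := by
  have hcot : HasSum (cotTerm x) (π * Complex.cot (π * x) - 1 / x) :=
    (summable_cotTerm hx).hasSum_iff_tendsto_nat.2 (tendsto_logDeriv_euler_cot_sub hx)
  -- `cotTerm` pairs the poles `n + 1` and `-(n + 1)`; telescoping re-pairs `n + 1` with `-n`.
  have htelescope := hasSum_one_div_add_sub_one_div_add_one fun n => by
    simpa using Complex.integerComplement_add_ne_zero hx n
  rw [← sub_add_cancel (π * Complex.cot (π * x)) (1 / x)]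
  refine (hcot.add htelescope).congr_fun fun n => ?_
  rw [cotTerm, ← neg_sub x (n + 1), one_div_neg_eq_neg_one_div]
  ring

theorem hasSum_pi_mul_cot_real {x : ℝ} (hx : x ∉ range ((↑) : ℤ → ℝ)) :
    HasSum (fun n : ℕ => 1 / (x + n) - 1 / (n + 1 - x)) (π * cot (π * x)) := by
  have hx' : (x : ℂ) ∈ Complex.integerComplement := by
    rintro ⟨k, hk⟩
    exact hx ⟨k, mod_cast hk⟩
  rw [← Complex.hasSum_ofReal]
  push_cast
  exact hasSum_pi_mul_cot_complex hx'

end CotangentSeries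

section SeriesOfFunctions

variable {X ι E : Type*} [MeasurableSpace X] {μ : Measure X} [Countable ι] [NormedAddCommGroup E]

theorem integrable_of_hasSum_of_summable_integral_norm {F : ι → X → E} {f : X → E}
    (hF : ∀ i, Integrable (F i) μ) (hsum : Summable fun i => ∫ x, ‖F i x‖ ∂μ)
    (hf : ∀ᵐ x ∂μ, HasSum (F · x) (f x)) : Integrable f μ := by
  refine ⟨aestronglyMeasurable_of_tendsto_ae atTop
    (fun s => (integrable_finsetSum s fun i _ => hF i).aestronglyMeasurable) hf, ?_⟩
  calc ∫⁻ x, ‖f x‖ₑ ∂μ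
      ≤ ∫⁻ x, ∑' i, ‖F i x‖ₑ ∂μ := lintegral_mono_ae <| hf.mono fun x hx => by
        rw [← hx.tsum_eq]
        exact enorm_tsum_le_tsum_enorm
    _ = ∑' i, ∫⁻ x, ‖F i x‖ₑ ∂μ := lintegral_tsum fun i => (hF i).aestronglyMeasurable.enorm
    _ = ∑' i, ENNReal.ofReal (∫ x, ‖F i x‖ ∂μ) := by
        simp only [ofReal_integral_norm_eq_lintegral_enorm (hF _)]
    _ < ⊤ := hsum.tsum_ofReal_lt_top

theorem hasSum_integral_of_hasSum_of_summable_integral_norm [NormedSpace ℝ E]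
    {F : ι → X → E} {f : X → E}
    (hF : ∀ i, Integrable (F i) μ) (hsum : Summable fun i => ∫ x, ‖F i x‖ ∂μ)
    (hf : ∀ᵐ x ∂μ, HasSum (F · x) (f x)) : HasSum (fun i => ∫ x, F i x ∂μ) (∫ x, f x ∂μ) := by
  rw [← integral_congr_ae (hf.mono fun x hx => hx.tsum_eq)]
  exact hasSum_integral_of_summable_integral_norm hF hsum

end SeriesOfFunctions

section Inversion

variable {E : Type*} [NormedAddCommGroup E] [NormedSpace ℝ E] {c : ℝ}

theorem integrableOn_Ioi_iff_intervalIntegrable_inv (hc : 0 < c) (f : ℝ → E) :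
    IntegrableOn f (Ioi c) ↔
      IntervalIntegrable (fun x => (x ^ 2)⁻¹ • f x⁻¹) volume 0 c⁻¹ := by
  have h := integrableOn_image_iff_integrableOn_abs_deriv_smul measurableSet_Ioo
    (fun x (hx : x ∈ Ioo 0 c⁻¹) => (hasDerivAt_inv hx.1.ne').hasDerivWithinAt)
    inv_injective.injOn f
  rw [image_inv_eq_inv, ← inv_Ioi₀ hc, inv_inv, inv_Ioi₀ hc] at h
  rw [h, intervalIntegrable_iff_integrableOn_Ioo_of_le (inv_nonneg.2 hc.le)]
  simp only [abs_neg, abs_inv, abs_sq]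

theorem integral_Ioi_eq_integral_inv (hc : 0 < c) (f : ℝ → E) :
    ∫ x in Ioi c, f x = ∫ x in 0..c⁻¹, (x ^ 2)⁻¹ • f x⁻¹ := by
  have h := integral_image_eq_integral_abs_deriv_smul measurableSet_Ioo
    (fun x (hx : x ∈ Ioo 0 c⁻¹) => (hasDerivAt_inv hx.1.ne').hasDerivWithinAt)
    inv_injective.injOn f
  rw [image_inv_eq_inv, ← inv_Ioi₀ hc, inv_inv, inv_Ioi₀ hc] at h
  rw [h, intervalIntegral.integral_of_le (inv_nonneg.2 hc.le), integral_Ioc_eq_integral_Ioo]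
  simp only [abs_neg, abs_inv, abs_sq]

theorem inv_sq_mul_rpow_inv_div (s σ : ℝ) {x : ℝ} (hx : 0 < x) :
    (x ^ 2)⁻¹ • (x⁻¹ ^ (s - 1) / (1 + σ * x⁻¹)) = x ^ (-s) / (x + σ) := by
  have h : x⁻¹ ^ (s - 1) = x ^ (-s) * x := by
    rw [inv_rpow hx.le, ← rpow_neg hx.le, neg_sub', sub_neg_eq_add, rpow_add_one hx.ne']
  rw [h, smul_eq_mul, show 1 + σ * x⁻¹ = (x + σ) / x by field_simp]
  field_simp

end Inversion

section GeometricExpansion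

variable {a b p : ℝ}

theorem intervalIntegrable_rpow_sub_one_mul_rpow_pow (ha : 0 < a) (hp : 0 < p) (n : ℕ) :
    IntervalIntegrable (fun z : ℝ => z ^ (a - 1) * (z ^ p) ^ n) volume 0 1 :=
  (intervalIntegral.intervalIntegrable_rpow' (by linarith)).mul_continuousOn
    ((continuous_rpow_const hp.le).pow n).continuousOn

theorem integral_rpow_sub_one_mul_rpow_pow (ha : 0 < a) (hp : 0 < p) (n : ℕ) :
    ∫ z in (0 : ℝ)..1, z ^ (a - 1) * (z ^ p) ^ n = 1 / (a + p * n) := by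
  have hpos : 0 < a + p * n := by positivity
  calc ∫ z in (0 : ℝ)..1, z ^ (a - 1) * (z ^ p) ^ n
      = ∫ z in (0 : ℝ)..1, z ^ (a + p * n - 1) := by
        refine intervalIntegral.integral_congr_uIoo fun z hz => ?_
        rw [uIoo_of_le zero_le_one] at hz
        rw [← rpow_mul_natCast hz.1.le, ← rpow_add hz.1, sub_add_eq_add_sub]
    _ = 1 / (a + p * n) := by
        rw [integral_rpow (.inl (by linarith)), sub_add_cancel, one_rpow, zero_rpow hpos.ne',
          sub_zero]

theorem intervalIntegrable_rpow_sub_rpow_mul_rpow_pow (ha : 0 < a) (hb : 0 < b) (hp : 0 < p)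
    (n : ℕ) :
    IntervalIntegrable (fun z : ℝ => (z ^ (a - 1) - z ^ (b - 1)) * (z ^ p) ^ n) volume 0 1 := by
  simp only [sub_mul]
  exact (intervalIntegrable_rpow_sub_one_mul_rpow_pow ha hp n).sub
    (intervalIntegrable_rpow_sub_one_mul_rpow_pow hb hp n)

theorem integral_rpow_sub_rpow_mul_rpow_pow (ha : 0 < a) (hb : 0 < b) (hp : 0 < p) (n : ℕ) :
    ∫ z in (0 : ℝ)..1, (z ^ (a - 1) - z ^ (b - 1)) * (z ^ p) ^ n =
      1 / (a + p * n) - 1 / (b + p * n) := by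
  simp only [sub_mul]
  rw [intervalIntegral.integral_sub (intervalIntegrable_rpow_sub_one_mul_rpow_pow ha hp n)
      (intervalIntegrable_rpow_sub_one_mul_rpow_pow hb hp n),
    integral_rpow_sub_one_mul_rpow_pow ha hp, integral_rpow_sub_one_mul_rpow_pow hb hp]

theorem summable_one_div_add_mul_sub_one_div_add_mul (ha : 0 < a) (hb : 0 < b) (hp : 0 < p) :
    Summable fun n : ℕ => 1 / (a + p * n) - 1 / (b + p * n) := by
  set c := min a b
  have hc : 0 < c := lt_min ha hb
  have hsq : Summable fun n : ℕ => |b - a| / p ^ 2 * (1 / |n + c / p| ^ (2 : ℝ)) :=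
    ((summable_one_div_nat_add_rpow (c / p) 2).2 one_lt_two).mul_left _
  refine hsq.of_norm_bounded fun n => ?_
  have hcn : 0 < c + p * n := by positivity
  have han : c + p * n ≤ a + p * n := by gcongr; exact min_le_left a b
  have hbn : c + p * n ≤ b + p * n := by gcongr; exact min_le_right a b
  calc ‖1 / (a + p * n) - 1 / (b + p * n)‖ = |b - a| / ((a + p * n) * (b + p * n)) := by
        rw [div_sub_div _ _ (hcn.trans_le han).ne' (hcn.trans_le hbn).ne', one_mul, mul_one,
          add_sub_add_right_eq_sub, norm_div, norm_eq_abs,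
          norm_of_nonneg (mul_pos (hcn.trans_le han) (hcn.trans_le hbn)).le]
    _ ≤ |b - a| / ((c + p * n) * (c + p * n)) := by gcongr
    _ = |b - a| / p ^ 2 * (1 / |n + c / p| ^ (2 : ℝ)) := by
        rw [rpow_two, sq_abs]
        field_simp
        ring

theorem summable_integral_norm_rpow_sub_rpow_mul_rpow_pow (ha : 0 < a) (hb : 0 < b) (hp : 0 < p) :
    Summable fun n : ℕ =>
      ∫ z in Ioo (0 : ℝ) 1, ‖(z ^ (a - 1) - z ^ (b - 1)) * (z ^ p) ^ n‖ := by
  wlog hab : a ≤ b generalizing a b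
  · simpa only [norm_mul, norm_sub_rev] using this hb ha (le_of_not_ge hab)
  refine (summable_one_div_add_mul_sub_one_div_add_mul ha hb hp).congr fun n => ?_
  rw [← integral_rpow_sub_rpow_mul_rpow_pow ha hb hp, intervalIntegral.integral_of_le zero_le_one,
    integral_Ioc_eq_integral_Ioo]
  refine setIntegral_congr_fun measurableSet_Ioo fun z hz => (norm_of_nonneg ?_).symm
  have hanti := rpow_le_rpow_of_exponent_ge hz.1 hz.2.le (sub_le_sub_right hab 1)
  have := hz.1
  exact mul_nonneg (sub_nonneg.2 hanti) (by positivity)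

theorem ae_hasSum_rpow_sub_rpow_mul_rpow_pow (hp : 0 < p) :
    ∀ᵐ z ∂volume.restrict (Ioo (0 : ℝ) 1),
      HasSum (fun n : ℕ => (z ^ (a - 1) - z ^ (b - 1)) * (z ^ p) ^ n)
        ((z ^ (a - 1) - z ^ (b - 1)) / (1 - z ^ p)) :=
  ae_restrict_of_forall_mem measurableSet_Ioo fun _ hz =>
    (hasSum_geometric_of_lt_one (rpow_nonneg hz.1.le p) (rpow_lt_one hz.1.le hz.2 hp)).mul_left _

theorem intervalIntegrable_rpow_sub_rpow_div_one_sub_rpow (ha : 0 < a) (hb : 0 < b) (hp : 0 < p) :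
    IntervalIntegrable (fun z : ℝ => (z ^ (a - 1) - z ^ (b - 1)) / (1 - z ^ p)) volume 0 1 := by
  rw [intervalIntegrable_iff_integrableOn_Ioo_of_le zero_le_one]
  exact integrable_of_hasSum_of_summable_integral_norm
    (fun n => (intervalIntegrable_iff_integrableOn_Ioo_of_le zero_le_one).1
      (intervalIntegrable_rpow_sub_rpow_mul_rpow_pow ha hb hp n))
    (summable_integral_norm_rpow_sub_rpow_mul_rpow_pow ha hb hp)
    (ae_hasSum_rpow_sub_rpow_mul_rpow_pow hp)

theorem hasSum_integral_rpow_sub_rpow_div_one_sub_rpow (ha : 0 < a) (hb : 0 < b) (hp : 0 < p) :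
    HasSum (fun n : ℕ => 1 / (a + p * n) - 1 / (b + p * n))
      (∫ z in (0 : ℝ)..1, (z ^ (a - 1) - z ^ (b - 1)) / (1 - z ^ p)) := by
  simp only [← integral_rpow_sub_rpow_mul_rpow_pow ha hb hp,
    intervalIntegral.integral_of_le zero_le_one, integral_Ioc_eq_integral_Ioo]
  exact hasSum_integral_of_hasSum_of_summable_integral_norm
    (fun n => (intervalIntegrable_iff_integrableOn_Ioo_of_le zero_le_one).1
      (intervalIntegrable_rpow_sub_rpow_mul_rpow_pow ha hb hp n))
    (summable_integral_norm_rpow_sub_rpow_mul_rpow_pow ha hb hp)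
    (ae_hasSum_rpow_sub_rpow_mul_rpow_pow hp)

theorem integral_rpow_sub_rpow_div_one_sub_rpow_eq_cot (ha : 0 < a) (hap : a < p) :
    ∫ z in (0 : ℝ)..1, (z ^ (a - 1) - z ^ (p - a - 1)) / (1 - z ^ p) =
      π / p * cot (π * (a / p)) := by
  have hp : 0 < p := ha.trans hap
  have hfract : a / p ∉ range ((↑) : ℤ → ℝ) := by
    rintro ⟨k, hk⟩
    have hk₀ : (0 : ℝ) < k := hk ▸ div_pos ha hp
    have hk₁ : (k : ℝ) < 1 := hk ▸ (div_lt_one hp).2 hap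
    norm_cast at hk₀ hk₁
    lia
  have hterm (n : ℕ) : 1 / (a + p * n) - 1 / (p - a + p * n) =
      (1 / (a / p + n) - 1 / (n + 1 - a / p)) / p := by
    rw [show a / p + n = (a + p * n) / p by field_simp,
      show n + 1 - a / p = (p - a + p * n) / p by field_simp; ring]
    field_simp
  rw [div_mul_eq_mul_div]
  refine (hasSum_integral_rpow_sub_rpow_div_one_sub_rpow ha (sub_pos.2 hap) hp).unique ?_
  exact ((hasSum_pi_mul_cot_real hfract).div_const p).congr_fun hterm

end GeometricExpansion

section PrincipalValue

variable {E : Type*} [NormedAddCommGroup E] [NormedSpace ℝ E]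

theorem tendsto_integral_nhdsLT {f : ℝ → E} {a b : ℝ} (hab : a < b)
    (hf : IntervalIntegrable f volume a b) :
    Tendsto (fun x => ∫ z in a..x, f z) (𝓝[<] b) (𝓝 (∫ z in a..b, f z)) := by
  have h := intervalIntegral.continuousOn_primitive_interval' hf left_mem_uIcc b right_mem_uIcc
  rw [uIcc_of_le hab.le] at h
  exact h.mono_left (nhdsWithin_le_of_mem (Icc_mem_nhdsLT hab))

-- The interval has length `O(ε ^ 2)`, while the integrand is `O(1 / ε)` on it.
theorem tendsto_integral_inv_one_add_div_one_sub {φ : ℝ → ℝ}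
    (hφ : φ =O[𝓝[<] 1] (1 : ℝ → ℝ)) :
    Tendsto (fun ε => ∫ z in (1 - ε)..(1 + ε)⁻¹, φ z / (1 - z)) (𝓝[>] 0) (𝓝 0) := by
  obtain ⟨C, hC, hbound⟩ := hφ.exists_nonneg
  obtain ⟨l, hl, hφC⟩ := mem_nhdsLT_iff_exists_Ioo_subset.1 hbound.bound
  have hlim : Tendsto (fun ε => C * ε) (𝓝[>] 0) (𝓝 0) := by
    simpa using (tendsto_id.const_mul C).mono_left (nhdsWithin_le_nhds (a := (0 : ℝ)))
  refine squeeze_zero_norm' ?_ hlim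
  filter_upwards [Ioo_mem_nhdsGT (sub_pos.2 hl)] with ε ⟨hε, hεl⟩
  have hlen : (1 + ε)⁻¹ - (1 - ε) = ε ^ 2 / (1 + ε) := by field_simp; ring
  have hgap : 1 - (1 + ε)⁻¹ = ε / (1 + ε) := by field_simp; ring
  have hle : 1 - ε ≤ (1 + ε)⁻¹ := sub_nonneg.1 (hlen ▸ by positivity)
  calc ‖∫ z in (1 - ε)..(1 + ε)⁻¹, φ z / (1 - z)‖
      ≤ C / (ε / (1 + ε)) * |(1 + ε)⁻¹ - (1 - ε)| := by
        refine intervalIntegral.norm_integral_le_of_norm_le_const fun z hz => ?_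
        rw [uIoc_of_le hle] at hz
        have hgap_le : ε / (1 + ε) ≤ 1 - z := hgap ▸ sub_le_sub_left hz.2 1
        have hgap_pos : 0 < ε / (1 + ε) := by positivity
        have hφz : ‖φ z‖ ≤ C := by
          simpa using hφC ⟨by linarith [hz.1], by linarith⟩
        rw [norm_div, norm_of_nonneg (hgap_pos.le.trans hgap_le)]
        gcongr
    _ = C * ε := by
        rw [hlen, abs_of_nonneg (by positivity)]
        field_simp

theorem setIntegral_lt_abs_sub {f : ℝ → E} {a c ε : ℝ} (hε : 0 ≤ ε) (ha : a ≤ c - ε)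
    (hleft : IntegrableOn f (Iic a)) (hmid : IntervalIntegrable f volume a (c - ε))
    (hright : IntegrableOn f (Ioi (c + ε))) :
    ∫ z in {z : ℝ | ε < |z - c|}, f z =
      (∫ z in Iic a, f z) + (∫ z in a..(c - ε), f z) + ∫ z in Ioi (c + ε), f z := by
  have hset : {z : ℝ | ε < |z - c|} = Iio (c - ε) ∪ Ioi (c + ε) := by
    ext z
    simp only [mem_ofPred_eq, lt_abs, mem_union, mem_Iio, mem_Ioi]
    grind
  have hdisj : Disjoint (Iio (c - ε)) (Ioi (c + ε)) :=
    Iio_disjoint_Ioi_of_le (by linarith)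
  have hIic : IntegrableOn f (Iic (c - ε)) := by
    rw [← Iic_union_Ioc_eq_Iic ha]
    exact hleft.union ((intervalIntegrable_iff_integrableOn_Ioc_of_le ha).1 hmid)
  rw [hset, setIntegral_union hdisj measurableSet_Ioi (hIic.mono_set Iio_subset_Iic_self) hright,
    ← integral_Iic_eq_integral_Iio, ← intervalIntegral.integral_Iic_sub_Iic hleft hIic,
    add_sub_cancel]

end PrincipalValue

section Kernel

variable {α β a b c : ℝ}

theorem integrableOn_Ioi_rpow_div_one_add_mul_iff (hc : 0 < c) (s σ : ℝ) :
    IntegrableOn (fun z : ℝ => z ^ (s - 1) / (1 + σ * z)) (Ioi c) ↔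
      IntervalIntegrable (fun z : ℝ => z ^ (-s) / (z + σ)) volume 0 c⁻¹ := by
  rw [integrableOn_Ioi_iff_intervalIntegrable_inv hc]
  refine intervalIntegrable_congr_uIoo fun z hz => inv_sq_mul_rpow_inv_div s σ ?_
  rw [uIoo_of_le (inv_nonneg.2 hc.le)] at hz
  exact hz.1

theorem integral_Ioi_rpow_div_one_add_mul (hc : 0 < c) (s σ : ℝ) :
    ∫ z in Ioi c, z ^ (s - 1) / (1 + σ * z) = ∫ z in 0..c⁻¹, z ^ (-s) / (z + σ) := by
  rw [integral_Ioi_eq_integral_inv hc]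
  refine intervalIntegral.integral_congr_uIoo fun z hz => inv_sq_mul_rpow_inv_div s σ ?_
  rw [uIoo_of_le (inv_nonneg.2 hc.le)] at hz
  exact hz.1

theorem intervalIntegrable_rpow_div {g : ℝ → ℝ} (hβ : -1 < β) (hg : ContinuousOn g (uIcc a b))
    (hg₀ : ∀ z ∈ uIcc a b, g z ≠ 0) :
    IntervalIntegrable (fun z => z ^ β / g z) volume a b :=
  (intervalIntegral.intervalIntegrable_rpow' hβ).mul_continuousOn (hg.inv₀ hg₀)

theorem intervalIntegrable_rpow_div_one_add (hβ : -1 < β) (ha : -1 < a) (hb : -1 < b) :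
    IntervalIntegrable (fun z : ℝ => z ^ β / (1 + z)) volume a b := by
  refine intervalIntegrable_rpow_div hβ (by fun_prop) fun z hz => ?_
  linarith [hz.1, lt_min ha hb]

theorem intervalIntegrable_rpow_div_one_sub (hβ : -1 < β) (ha : a < 1) (hb : b < 1) :
    IntervalIntegrable (fun z : ℝ => z ^ β / (1 - z)) volume a b := by
  refine intervalIntegrable_rpow_div hβ (by fun_prop) fun z hz => ?_
  linarith [hz.2, max_lt ha hb]

theorem integrableOn_Ioi_one_rpow_div_one_add (hα : α < 1) :
    IntegrableOn (fun z : ℝ => z ^ (α - 1) / (1 + z)) (Ioi 1) := by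
  have h := (integrableOn_Ioi_rpow_div_one_add_mul_iff one_pos α 1).2
  simp only [one_mul, inv_one, add_comm _ (1 : ℝ)] at h
  exact h (intervalIntegrable_rpow_div_one_add (by linarith) (by norm_num) (by norm_num))

theorem integrableOn_Ioi_rpow_div_one_sub (hα : α < 1) (hc : 1 < c) :
    IntegrableOn (fun z : ℝ => z ^ (α - 1) / (1 - z)) (Ioi c) := by
  have h := (integrableOn_Ioi_rpow_div_one_add_mul_iff (zero_lt_one.trans hc) α (-1)).2
  simp only [neg_one_mul, ← sub_eq_add_neg] at h
  refine h ?_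
  simp only [← neg_sub (1 : ℝ), div_neg]
  exact (intervalIntegrable_rpow_div_one_sub (by linarith) one_pos (inv_lt_one_of_one_lt₀ hc)).neg

theorem integral_Ioi_rpow_div_one_sub (hc : 0 < c) :
    ∫ z in Ioi c, z ^ (α - 1) / (1 - z) = -∫ z in 0..c⁻¹, z ^ (-α) / (1 - z) := by
  have h := integral_Ioi_rpow_div_one_add_mul hc α (-1)
  simp only [neg_one_mul, ← sub_eq_add_neg] at h
  rw [h, ← intervalIntegral.integral_neg]
  simp only [← neg_sub (1 : ℝ), div_neg]

theorem integrableOn_Ioi_zero_rpow_div_one_add (hα : 0 < α) (hα1 : α < 1) :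
    IntegrableOn (fun z : ℝ => z ^ (α - 1) / (1 + z)) (Ioi 0) := by
  rw [← Ioc_union_Ioi_eq_Ioi zero_le_one]
  refine IntegrableOn.union ?_ (integrableOn_Ioi_one_rpow_div_one_add hα1)
  rw [← intervalIntegrable_iff_integrableOn_Ioc_of_le zero_le_one]
  exact intervalIntegrable_rpow_div_one_add (by linarith) (by norm_num) (by norm_num)

theorem integral_Ioi_zero_rpow_div_one_add (hα : 0 < α) (hα1 : α < 1) :
    ∫ z in Ioi 0, z ^ (α - 1) / (1 + z) =
      ∫ z in (0 : ℝ)..1, (z ^ (α - 1) + z ^ (-α)) / (1 + z) := by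
  have hinv := integral_Ioi_rpow_div_one_add_mul one_pos α 1
  simp only [one_mul, inv_one, add_comm _ (1 : ℝ)] at hinv
  have hint {β : ℝ} (hβ : -1 < β) :
      IntervalIntegrable (fun z : ℝ => z ^ β / (1 + z)) volume 0 1 :=
    intervalIntegrable_rpow_div_one_add hβ (by norm_num) (by norm_num)
  rw [← intervalIntegral.integral_interval_add_Ioi (integrableOn_Ioi_zero_rpow_div_one_add hα hα1)
      (integrableOn_Ioi_one_rpow_div_one_add hα1), hinv,
    ← intervalIntegral.integral_add (hint (by linarith)) (hint (by linarith))]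
  simp only [add_div]

theorem intervalIntegrable_rpow_sub_rpow_neg_div_one_sub (hα : 0 < α) (hα1 : α < 1) :
    IntervalIntegrable (fun z : ℝ => (z ^ (α - 1) - z ^ (-α)) / (1 - z)) volume 0 1 := by
  have h := intervalIntegrable_rpow_sub_rpow_div_one_sub_rpow hα (sub_pos.2 hα1) one_pos
  simpa only [rpow_one, sub_sub_cancel_left] using h

theorem integral_rpow_div_one_add_add_integral_rpow_div_one_sub (hα : 0 < α) (hα1 : α < 1) :
    (∫ z in (0 : ℝ)..1, (z ^ (α - 1) + z ^ (-α)) / (1 + z)) +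
        ∫ z in (0 : ℝ)..1, (z ^ (α - 1) - z ^ (-α)) / (1 - z) =
      π * cot (α * π / 2) := by
  have hadd : IntervalIntegrable (fun z : ℝ => (z ^ (α - 1) + z ^ (-α)) / (1 + z)) volume 0 1 := by
    simp only [add_div]
    exact (intervalIntegrable_rpow_div_one_add (by linarith) (by norm_num) (by norm_num)).add
      (intervalIntegrable_rpow_div_one_add (by linarith) (by norm_num) (by norm_num))
  have hcot := integral_rpow_sub_rpow_div_one_sub_rpow_eq_cot hα (hα1.trans one_lt_two)
  calc _ = ∫ z in (0 : ℝ)..1, 2 * ((z ^ (α - 1) - z ^ (2 - α - 1)) / (1 - z ^ (2 : ℝ))) := by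
        rw [← intervalIntegral.integral_add hadd
          (intervalIntegrable_rpow_sub_rpow_neg_div_one_sub hα hα1)]
        refine intervalIntegral.integral_congr_uIoo fun z hz => ?_
        rw [uIoo_of_le zero_le_one] at hz
        have hz_add : 1 + z ≠ 0 := by linarith [hz.1]
        have hz_sub : 1 - z ≠ 0 := by linarith [hz.2]
        rw [show 2 - α - 1 = -α + 1 by ring, rpow_add_one hz.1.ne', rpow_two,
          show 1 - z ^ 2 = (1 + z) * (1 - z) by ring]
        field_simp
        ring
    _ = π * cot (α * π / 2) := by
        rw [intervalIntegral.integral_const_mul, hcot, ← mul_div_assoc π α, mul_comm π α]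
        ring

theorem tendsto_principalValue_Ioi_zero (hα : 0 < α) (hα1 : α < 1) :
    Tendsto (fun ε => (∫ z in 0..(1 - ε), z ^ (α - 1) / (1 - z)) +
        ∫ z in Ioi (1 + ε), z ^ (α - 1) / (1 - z))
      (𝓝[>] 0) (𝓝 (∫ z in (0 : ℝ)..1, (z ^ (α - 1) - z ^ (-α)) / (1 - z))) := by
  have hone_sub : Tendsto (fun ε : ℝ => 1 - ε) (𝓝[>] 0) (𝓝[<] 1) := by
    refine tendsto_nhdsWithin_iff.2 ⟨?_, ?_⟩
    · simpa using (tendsto_id.const_sub (1 : ℝ)).mono_left (nhdsWithin_le_nhds (a := (0 : ℝ)))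
    · filter_upwards [self_mem_nhdsWithin] with ε hε using sub_lt_self (1 : ℝ) hε
  have hmain := (tendsto_integral_nhdsLT one_pos
    (intervalIntegrable_rpow_sub_rpow_neg_div_one_sub hα hα1)).comp hone_sub
  have herror := tendsto_integral_inv_one_add_div_one_sub <|
    ((continuousAt_rpow_const (1 : ℝ) (-α) (.inl one_ne_zero)).mono_left
      nhdsWithin_le_nhds).isBigO_one ℝ
  rw [← sub_zero (∫ z in (0 : ℝ)..1, _)]
  refine (hmain.sub herror).congr' ?_
  filter_upwards [self_mem_nhdsWithin] with ε (hε : 0 < ε)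
  have hε_inv : (1 + ε)⁻¹ < 1 := inv_lt_one_of_one_lt₀ (by linarith)
  have hint {β b : ℝ} (hβ : -1 < β) (hb : b < 1) :
      IntervalIntegrable (fun z : ℝ => z ^ β / (1 - z)) volume 0 b :=
    intervalIntegrable_rpow_div_one_sub hβ one_pos hb
  rw [integral_Ioi_rpow_div_one_sub (by linarith)]
  simp only [Function.comp_apply, sub_div]
  rw [intervalIntegral.integral_sub (hint (by linarith) (by linarith))
    (hint (by linarith) (by linarith)), ← intervalIntegral.integral_interval_sub_left
    (hint (b := (1 + ε)⁻¹) (by linarith) hε_inv) (hint (b := 1 - ε) (by linarith) (by linarith))]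
  ring

theorem setIntegral_abs_rpow_div_one_sub {ε : ℝ} (hα : 0 < α) (hα1 : α < 1) (hε : 0 < ε)
    (hε1 : ε < 1) :
    ∫ z in {z : ℝ | ε < |z - 1|}, |z| ^ (α - 1) / (1 - z) =
      (∫ z in Ioi 0, z ^ (α - 1) / (1 + z)) +
        ((∫ z in 0..(1 - ε), z ^ (α - 1) / (1 - z)) +
          ∫ z in Ioi (1 + ε), z ^ (α - 1) / (1 - z)) := by
  have hneg : EqOn (fun z : ℝ => |z| ^ (α - 1) / (1 - z)) (fun z => (-z) ^ (α - 1) / (1 + -z))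
      (Iic 0) := fun z hz => by
    simp only [abs_of_nonpos (mem_Iic.1 hz), sub_eq_add_neg]
  have hpos : EqOn (fun z : ℝ => |z| ^ (α - 1) / (1 - z)) (fun z => z ^ (α - 1) / (1 - z))
      (Ioi 0) := fun z hz => by
    simp only [abs_of_pos (mem_Ioi.1 hz)]
  have hmid : EqOn (fun z : ℝ => |z| ^ (α - 1) / (1 - z)) (fun z => z ^ (α - 1) / (1 - z))
      (uIoo 0 (1 - ε)) := hpos.mono <| by
    rw [uIoo_of_le (by linarith)]
    exact Ioo_subset_Ioi_self
  have hright : EqOn (fun z : ℝ => |z| ^ (α - 1) / (1 - z)) (fun z => z ^ (α - 1) / (1 - z))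
      (Ioi (1 + ε)) := hpos.mono (Ioi_subset_Ioi (by linarith))
  rw [setIntegral_lt_abs_sub hε.le (a := 0) (by linarith),
    setIntegral_congr_fun measurableSet_Iic hneg,
    integral_comp_neg_Iic 0 fun z : ℝ => z ^ (α - 1) / (1 + z), neg_zero,
    intervalIntegral.integral_congr_uIoo hmid, setIntegral_congr_fun measurableSet_Ioi hright,
    add_assoc]
  · rw [integrableOn_congr_fun hneg measurableSet_Iic]
    simpa using ((integrableOn_Ici_iff_integrableOn_Ioi (by simp)).2
      (integrableOn_Ioi_zero_rpow_div_one_add hα hα1)).comp_neg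
  · rw [intervalIntegrable_congr_uIoo hmid]
    exact intervalIntegrable_rpow_div_one_sub (by linarith) one_pos (by linarith)
  · rw [integrableOn_congr_fun hright measurableSet_Ioi]
    exact integrableOn_Ioi_rpow_div_one_sub hα1 (by linarith)

end Kernel

/-- The principal value of `∫ |z|^{α-1}/(1-z) dz` over `ℝ` equals `π·cot(απ/2)`. -/
theorem pv_integral_cot (α : ℝ) (hα : 0 < α) (hα1 : α < 1) :
    Tendsto (fun ε : ℝ => ∫ z in {z : ℝ | ε < |z - 1|}, |z| ^ (α - 1) / (1 - z))
      (nhdsWithin 0 (Set.Ioi 0))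
      (nhds (Real.pi * Real.cot (α * Real.pi / 2))) := by
  rw [← integral_rpow_div_one_add_add_integral_rpow_div_one_sub hα hα1,
    ← integral_Ioi_zero_rpow_div_one_add hα hα1]
  refine ((tendsto_principalValue_Ioi_zero hα hα1).const_add _).congr' ?_
  filter_upwards [Ioo_mem_nhdsGT one_pos] with ε ⟨hε, hε1⟩
  exact (setIntegral_abs_rpow_div_one_sub hα hα1 hε hε1).symm
end

section
/- Let 0 < α < 1 and define the odd function F : ℝ → ℝ by F(z) = sin(απ/2)·sgn(z)·|z|^α / (1 + 2·cos(απ/2)·|z|^α + |z|^{2α}). Then for every z ∈ ℝ, lim_{ε → 0⁺} (1/π) ∫_{{w : |z − w| > ε}} F(w)/(z − w) dw = −(1 + cos(απ/2)·|z|^α) / (1 + 2·cos(απ/2)·|z|^α + |z|^{2α}); i.e., the (principal-value) Hilbert transform of F is the even function H(F)(z) = −(1 + cos(απ/2)|z|^α)/(1 + 2cos(απ/2)|z|^α + |z|^{2α}). -/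
open MeasureTheory Filter

/-!
The function `G(z) = (1 + (-iz)^α)⁻¹` is holomorphic in the upper half plane, continuous up to the
real line, where its imaginary part is the profile, and of size `O(|z|^{-α})` at infinity. For any
such `G`, Cauchy's theorem on the half annulus `ε < |z - x| < R`, `Im z > 0`, applied to
`G(z) / (z - x)`, gives `∫_{|x - y| > ε} G(y) / (x - y) dy = -i ∫_0^π G(x + ε e^{iθ}) dθ` as
`R → ∞`. Letting `ε → 0` shows that the Hilbert transform of `G` on the line is `-i G`, and taking
imaginary parts, that of `Im G` is `-Re G`.
-/

open Bornology Asymptotics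
open scoped Topology

section TruncatedIntegrals

variable {E : Type*} [NormedAddCommGroup E] [NormedSpace ℝ E]

lemma setOf_lt_abs_sub (x ε : ℝ) :
    {y : ℝ | ε < |x - y|} = Set.Ioi (x + ε) ∪ Set.Iio (x - ε) := by
  ext y
  simp only [Set.mem_ofPred_eq, lt_abs, Set.mem_union, Set.mem_Ioi, Set.mem_Iio]
  constructor <;> rintro (h | h) <;> first | (left; linarith) | (right; linarith)

lemma tendsto_intervalIntegral_add_intervalIntegral_setOf_lt_abs_sub {k : ℝ → E} {x ε : ℝ}
    (hε : 0 < ε) (hk : IntegrableOn k {y | ε < |x - y|}) :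
    Tendsto (fun R => (∫ y in (x + ε)..(x + R), k y) + ∫ y in (x - R)..(x - ε), k y) atTop
      (𝓝 (∫ y in {y | ε < |x - y|}, k y)) := by
  rw [setOf_lt_abs_sub] at hk ⊢
  have hdisj : Disjoint (Set.Ioi (x + ε)) (Set.Iio (x - ε)) :=
    (Set.Iio_disjoint_Ioi_of_le (by linarith)).symm
  rw [setIntegral_union hdisj measurableSet_Iio hk.left_of_union hk.right_of_union,
    ← integral_Iic_eq_integral_Iio]
  exact (intervalIntegral_tendsto_integral_Ioi (x + ε) hk.left_of_union
      (tendsto_atTop_add_const_left atTop x tendsto_id)).add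
    (intervalIntegral_tendsto_integral_Iic (x - ε)
      ((integrableOn_Iic_iff_integrableOn_Iio).2 hk.right_of_union)
      (tendsto_atBot_add_const_left atTop x tendsto_neg_atTop_atBot))

lemma continuousOn_inv_sub_smul {g : ℝ → E} (hg : Continuous g) (x : ℝ) :
    ContinuousOn (fun y => (x - y)⁻¹ • g y) {x}ᶜ :=
  ((continuous_const.sub continuous_id).continuousOn.inv₀ fun _ hy =>
    sub_ne_zero.2 (Ne.symm hy)).smul hg.continuousOn

lemma integral_inv_sub_smul_eq_neg_integral_exp {g : ℝ → E} (hg : Continuous g) (x : ℝ)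
    {c ε R : ℝ} (hc : c ≠ 0) (hε : 0 < ε) (hR : 0 < R) :
    ∫ y in (x + c * ε)..(x + c * R), (x - y)⁻¹ • g y =
      -∫ t in Real.log ε..Real.log R, g (x + c * Real.exp t) := by
  have hmaps : (fun t => x + c * Real.exp t) '' Set.uIcc (Real.log ε) (Real.log R) ⊆ {x}ᶜ := by
    rintro _ ⟨t, -, rfl⟩
    simp [hc]
  have hsubst := intervalIntegral.integral_deriv_smul_comp'
    (fun t _ => ((Real.hasDerivAt_exp t).const_mul c).const_add x) (by fun_prop)
    ((continuousOn_inv_sub_smul hg x).mono hmaps)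
  have hkernel (t : ℝ) : (c * Real.exp t) * (x - (x + c * Real.exp t))⁻¹ = -1 := by
    rw [sub_add_cancel_left, inv_neg, mul_neg, mul_inv_cancel₀ (by positivity)]
  simp only [Function.comp_def, smul_smul, hkernel, neg_one_smul, Real.exp_log hε, Real.exp_log hR,
    intervalIntegral.integral_neg] at hsubst
  exact hsubst.symm

lemma inv_const_sub_isBigO_cobounded (x : ℝ) :
    (fun y : ℝ => (x - y)⁻¹) =O[cobounded ℝ] fun y => ‖y‖ ^ (-1 : ℝ) := by
  have hequiv : (fun y : ℝ => -y + x) ~[cobounded ℝ] fun y => -y :=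
    IsEquivalent.refl.add_isLittleO (isLittleO_const_id_cobounded x).neg_right
  have hinv := hequiv.inv.isBigO.norm_right
  simpa only [Real.rpow_neg_one, neg_add_eq_sub, Pi.inv_def, norm_inv, norm_neg] using hinv

lemma norm_rpow_neg_isBigO_one_add_norm {F : Type*} [NormedAddCommGroup F] {r : ℝ} (hr : 0 ≤ r) :
    (fun y : F => ‖y‖ ^ (-r)) =O[cobounded F] fun y => (1 + ‖y‖) ^ (-r) := by
  refine IsBigO.of_bound (2 ^ r) ?_
  filter_upwards [eventually_cobounded_le_norm 1] with y hy
  have hy0 : 0 < ‖y‖ := by linarith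
  rw [Real.norm_of_nonneg (by positivity), Real.norm_of_nonneg (by positivity),
    Real.rpow_neg (by positivity), Real.rpow_neg (by positivity), ← div_eq_mul_inv, inv_eq_one_div,
    div_le_div_iff₀ (by positivity) (by positivity), one_mul,
    ← Real.mul_rpow (by positivity) hy0.le]
  exact Real.rpow_le_rpow (by positivity) (by linarith) hr

lemma integrableOn_inv_sub_smul {g : ℝ → E} (hg : Continuous g) {s : ℝ} (hs : 0 < s)
    (hgs : g =O[cobounded ℝ] fun y => ‖y‖ ^ (-s)) (x : ℝ) {ε : ℝ} (hε : 0 < ε) :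
    IntegrableOn (fun y => (x - y)⁻¹ • g y) {y | ε < |x - y|} := by
  have hdecay : (fun y => (x - y)⁻¹ • g y) =O[cobounded ℝ] fun y => (1 + ‖y‖) ^ (-(1 + s)) := by
    refine ((inv_const_sub_isBigO_cobounded x).smul hgs).trans <|
      IsBigO.trans (EventuallyEq.isBigO ?_) (norm_rpow_neg_isBigO_one_add_norm (by positivity))
    filter_upwards [eventually_cobounded_le_norm 1] with y hy
    rw [smul_eq_mul, ← Real.rpow_add (by linarith), neg_add]
  have hfar : IntegrableAtFilter (fun y => (x - y)⁻¹ • g y) (cobounded ℝ) := by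
    rw [Metric.cobounded_eq_cocompact] at hdecay ⊢
    refine hdecay.integrableAtFilter ?_
      ((integrable_one_add_norm (by simpa using hs)).integrableAtFilter _)
    exact ⟨Set.univ, univ_mem, by
      rw [Measure.restrict_univ]
      exact ((measurable_const.sub measurable_id).inv.aestronglyMeasurable).smul
        hg.aestronglyMeasurable⟩
  obtain ⟨t, ht, hint⟩ := hfar
  have hclosed : IsClosed {y | ε ≤ |x - y|} := isClosed_le (by fun_prop) (by fun_prop)
  have hcompact : IsCompact ({y | ε ≤ |x - y|} ∩ closure tᶜ) :=
    (isBounded_compl_iff.2 ht).isCompact_closure.inter_left hclosed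
  have hnear : {y | ε ≤ |x - y|} ∩ closure tᶜ ⊆ {x}ᶜ := by
    rintro y ⟨hy, -⟩ rfl
    simp only [Set.mem_ofPred_eq, sub_self, abs_zero] at hy
    linarith
  refine (hint.union <|
    ((continuousOn_inv_sub_smul hg x).mono hnear).integrableOn_compact hcompact).mono_set ?_
  intro y (hy : ε < |x - y|)
  by_cases hyt : y ∈ t
  · exact .inl hyt
  · exact .inr ⟨hy.le, subset_closure hyt⟩

end TruncatedIntegrals

lemma continuous_comp_ofReal {X : Type*} [TopologicalSpace X] {G : ℂ → X}
    (hG : ContinuousOn G {z | 0 ≤ z.im}) : Continuous fun y : ℝ => G y :=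
  hG.comp_continuous Complex.continuous_ofReal fun y => (Complex.ofReal_im y).ge

section UpperHalfPlane

variable {E : Type*} [NormedAddCommGroup E] [NormedSpace ℂ E] {G : ℂ → E}

/-- The integral of `G` with respect to the angle over the upper semicircle with center `x` and
radius `r`. The circular parts of the boundary of a half annulus contribute such integrals to
Cauchy's theorem for `G(z) / (z - x)`. -/
noncomputable def upperSemicircleIntegral (G : ℂ → E) (x r : ℝ) : E :=
  ∫ θ in (0 : ℝ)..Real.pi, G (circleMap x r θ)

lemma circleMap_ofReal_im_nonneg (x : ℝ) {r θ : ℝ} (hr : 0 ≤ r) (hθ : θ ∈ Set.Icc 0 Real.pi) :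
    0 ≤ (circleMap x r θ).im := by
  have him : (circleMap x r θ).im = r * Real.sin θ := by
    simp [circleMap, Complex.exp_ofReal_mul_I_im]
  exact him ▸ mul_nonneg hr (Real.sin_nonneg_of_mem_Icc hθ)

lemma tendsto_upperSemicircleIntegral [CompleteSpace E] (hG : ContinuousOn G {z | 0 ≤ z.im})
    {x : ℝ} {l : Filter ℝ} [l.IsCountablyGenerated] {k : Filter ℂ} {c : E} (hl : ∀ᶠ r in l, 0 ≤ r)
    (hlk : Tendsto (fun p : ℝ × ℝ => circleMap x p.1 p.2) (l ×ˢ 𝓟 (Set.Icc 0 Real.pi)) k)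
    (hGc : Tendsto G (k ⊓ 𝓟 {z | 0 ≤ z.im}) (𝓝 c)) :
    Tendsto (upperSemicircleIntegral G x) l (𝓝 (Real.pi • c)) := by
  have hIcc : Set.uIcc 0 Real.pi = Set.Icc 0 Real.pi := Set.uIcc_of_le Real.pi_pos.le
  have hunif : TendstoUniformlyOn (fun r θ => G (circleMap x r θ)) (fun _ => c) l
      (Set.uIcc 0 Real.pi) := by
    rw [hIcc, ← tendsto_prod_principal_iff]
    refine hGc.comp (tendsto_inf.2 ⟨hlk, tendsto_principal.2 ?_⟩)
    filter_upwards [prod_mem_prod hl (mem_principal_self _)] with p hp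
    exact circleMap_ofReal_im_nonneg x hp.1 hp.2
  have hcont : ∀ᶠ r in l, ContinuousOn (fun θ => G (circleMap x r θ)) (Set.uIcc 0 Real.pi) := by
    filter_upwards [hl] with r hr
    refine hG.comp (continuous_circleMap _ _).continuousOn fun θ hθ => ?_
    exact circleMap_ofReal_im_nonneg x hr (hIcc ▸ hθ)
  simpa using! hunif.tendsto_intervalIntegral_of_continuousOn (μ := volume) hcont

lemma tendsto_upperSemicircleIntegral_nhdsGT_zero [CompleteSpace E]
    (hG : ContinuousOn G {z | 0 ≤ z.im}) (x : ℝ) :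
    Tendsto (upperSemicircleIntegral G x) (𝓝[>] 0) (𝓝 (Real.pi • G x)) := by
  refine tendsto_upperSemicircleIntegral hG (k := 𝓝 (x : ℂ))
    (eventually_mem_nhdsWithin.mono fun _ hr => le_of_lt hr) ?_ (hG x (by simp))
  rw [tendsto_iff_norm_sub_tendsto_zero]
  have hr : Tendsto (fun p : ℝ × ℝ => |p.1|) (𝓝[>] 0 ×ˢ 𝓟 (Set.Icc 0 Real.pi)) (𝓝 0) := by
    have habs : Tendsto (fun r : ℝ => |r|) (𝓝[>] 0) (𝓝 0) :=
      (continuous_abs.tendsto' 0 0 abs_zero).mono_left nhdsWithin_le_nhds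
    exact habs.comp tendsto_fst
  simpa [circleMap] using hr

lemma tendsto_upperSemicircleIntegral_atTop [CompleteSpace E]
    (hG : ContinuousOn G {z | 0 ≤ z.im})
    (hG0 : Tendsto G (cobounded ℂ ⊓ 𝓟 {z | 0 ≤ z.im}) (𝓝 0)) (x : ℝ) :
    Tendsto (upperSemicircleIntegral G x) atTop (𝓝 0) := by
  rw [← smul_zero Real.pi]
  refine tendsto_upperSemicircleIntegral hG (eventually_ge_atTop 0) ?_ hG0
  rw [← Metric.comap_dist_right_atTop (x : ℂ), tendsto_comap_iff]
  have hr : Tendsto (fun p : ℝ × ℝ => |p.1|) (atTop ×ˢ 𝓟 (Set.Icc 0 Real.pi)) atTop :=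
    tendsto_abs_atTop_atTop.comp tendsto_fst
  simpa [Function.comp_def, dist_eq_norm] using hr

lemma diffContOnCl_comp_add_exp (hG : DiffContOnCl ℂ G {z | 0 < z.im}) (x : ℝ) :
    DiffContOnCl ℂ (fun w => G (x + Complex.exp w)) (Set.univ ×ℂ Set.Ioo 0 Real.pi) := by
  refine hG.comp (Differentiable.diffContOnCl (by fun_prop)) fun w hw => ?_
  have him : ((x : ℂ) + Complex.exp w).im = Real.exp w.re * Real.sin w.im := by
    simp [Complex.exp_im]
  rw [Set.mem_ofPred_eq, him]
  exact mul_pos (Real.exp_pos _) (Real.sin_pos_of_mem_Ioo hw.2)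

-- Cauchy's theorem on a half annulus around `x`, in the coordinate `w` with `z = x + exp w`.
lemma integral_add_exp_sub_integral_sub_exp (hG : DiffContOnCl ℂ G {z | 0 < z.im}) (x a b : ℝ) :
    (∫ t in a..b, G ((x + Real.exp t : ℝ) : ℂ)) - (∫ t in a..b, G ((x - Real.exp t : ℝ) : ℂ)) =
      Complex.I • upperSemicircleIntegral G x (Real.exp a) -
        Complex.I • upperSemicircleIntegral G x (Real.exp b) := by
  have hexp := diffContOnCl_comp_add_exp hG x
  have hclosure : closure (Set.univ ×ℂ Set.Ioo 0 Real.pi) = Set.univ ×ℂ Set.Icc 0 Real.pi := by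
    rw [Complex.closure_reProdIm, closure_univ, closure_Ioo Real.pi_ne_zero.symm]
  have hrect := Complex.integral_boundary_rect_eq_zero_of_continuousOn_of_differentiableOn
    (fun w => G (x + Complex.exp w)) ⟨a, 0⟩ ⟨b, Real.pi⟩
    (hexp.continuousOn.mono <| hclosure ▸ fun w hw =>
      ⟨trivial, by simpa [Set.uIcc_of_le Real.pi_pos.le] using hw.2⟩)
    (hexp.differentiableOn.mono fun w hw => ⟨trivial, by simpa [Real.pi_pos.le] using hw.2⟩)
  have harc (r t : ℝ) :
      (x : ℂ) + Complex.exp (r + t * Complex.I) = circleMap x (Real.exp r) t := by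
    rw [circleMap, Complex.exp_add, Complex.ofReal_exp]
  have hright (t : ℝ) : circleMap x (Real.exp t) 0 = ((x + Real.exp t : ℝ) : ℂ) := by
    simp [circleMap]
  have hleft (t : ℝ) : circleMap x (Real.exp t) Real.pi = ((x - Real.exp t : ℝ) : ℂ) := by
    simp [circleMap, sub_eq_add_neg]
  simp only [harc, hright, hleft] at hrect
  rw [← sub_eq_zero, ← hrect, upperSemicircleIntegral, upperSemicircleIntegral]
  abel

lemma continuousOn_setOf_im_nonneg (hG : DiffContOnCl ℂ G {z | 0 < z.im}) :
    ContinuousOn G {z | 0 ≤ z.im} :=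
  Complex.closure_setOfPred_lt_im 0 ▸ hG.continuousOn

lemma integral_inv_sub_smul_add_integral_inv_sub_smul (hG : DiffContOnCl ℂ G {z | 0 < z.im})
    (x : ℝ) {ε R : ℝ} (hε : 0 < ε) (hR : 0 < R) :
    (∫ y in (x + ε)..(x + R), (x - y)⁻¹ • G y) + (∫ y in (x - R)..(x - ε), (x - y)⁻¹ • G y) =
      Complex.I • upperSemicircleIntegral G x R - Complex.I • upperSemicircleIntegral G x ε := by
  have hcont := continuous_comp_ofReal (continuousOn_setOf_im_nonneg hG)
  have hcauchy := integral_add_exp_sub_integral_sub_exp hG x (Real.log ε) (Real.log R)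
  have hright := integral_inv_sub_smul_eq_neg_integral_exp hcont x one_ne_zero hε hR
  have hleft := integral_inv_sub_smul_eq_neg_integral_exp hcont x (neg_ne_zero.2 one_ne_zero) hε hR
  simp only [one_mul, neg_one_mul, ← sub_eq_add_neg] at hright hleft
  rw [Real.exp_log hε, Real.exp_log hR] at hcauchy
  rw [intervalIntegral.integral_symm (x - ε), hright, hleft, neg_neg, neg_add_eq_sub, ← neg_sub,
    hcauchy, neg_sub]

lemma setIntegral_inv_sub_smul_eq_neg_I_smul [CompleteSpace E]
    (hG : DiffContOnCl ℂ G {z | 0 < z.im})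
    (hG0 : Tendsto G (cobounded ℂ ⊓ 𝓟 {z | 0 ≤ z.im}) (𝓝 0)) {x ε : ℝ} (hε : 0 < ε)
    (hint : IntegrableOn (fun y : ℝ => (x - y)⁻¹ • G y) {y | ε < |x - y|}) :
    ∫ y in {y : ℝ | ε < |x - y|}, (x - y)⁻¹ • G y =
      -(Complex.I • upperSemicircleIntegral G x ε) := by
  have hlarge :=
    (tendsto_upperSemicircleIntegral_atTop (continuousOn_setOf_im_nonneg hG) hG0 x).const_smul
      Complex.I |>.sub_const (Complex.I • upperSemicircleIntegral G x ε)
  rw [smul_zero, zero_sub] at hlarge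
  refine tendsto_nhds_unique ?_ hlarge
  refine (tendsto_intervalIntegral_add_intervalIntegral_setOf_lt_abs_sub hε hint).congr' ?_
  filter_upwards [eventually_gt_atTop 0] with R hR
  exact integral_inv_sub_smul_add_integral_inv_sub_smul hG x hε hR

lemma tendsto_pi_inv_smul_setIntegral_inv_sub_smul [CompleteSpace E]
    (hG : DiffContOnCl ℂ G {z | 0 < z.im})
    (hG0 : Tendsto G (cobounded ℂ ⊓ 𝓟 {z | 0 ≤ z.im}) (𝓝 0)) {x : ℝ}
    (hint : ∀ ε > 0, IntegrableOn (fun y : ℝ => (x - y)⁻¹ • G y) {y | ε < |x - y|}) :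
    Tendsto (fun ε => Real.pi⁻¹ • ∫ y in {y : ℝ | ε < |x - y|}, (x - y)⁻¹ • G y) (𝓝[>] 0)
      (𝓝 (-(Complex.I • G x))) := by
  have hsmall :=
    ((tendsto_upperSemicircleIntegral_nhdsGT_zero (continuousOn_setOf_im_nonneg hG) x).const_smul
      Complex.I).neg.const_smul Real.pi⁻¹
  rw [smul_comm Complex.I, ← smul_neg, inv_smul_smul₀ Real.pi_ne_zero] at hsmall
  refine hsmall.congr' ?_
  filter_upwards [self_mem_nhdsWithin] with ε hε
  rw [setIntegral_inv_sub_smul_eq_neg_I_smul hG hG0 hε (hint ε hε)]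

end UpperHalfPlane

theorem isPVHilbert_im_neg_re {G : ℂ → ℂ} (hG : DiffContOnCl ℂ G {z | 0 < z.im}) {s : ℝ}
    (hs : 0 < s) (hGs : G =O[cobounded ℂ ⊓ 𝓟 {z | 0 ≤ z.im}] fun z => ‖z‖ ^ (-s)) :
    IsPVHilbert (fun y => (G y).im) fun y => -(G y).re := by
  intro x
  have hG0 : Tendsto G (cobounded ℂ ⊓ 𝓟 {z | 0 ≤ z.im}) (𝓝 0) :=
    hGs.trans_tendsto <| ((tendsto_rpow_neg_atTop hs).comp tendsto_norm_cobounded_atTop).mono_left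
      inf_le_left
  have hofReal : Tendsto ((↑) : ℝ → ℂ) (cobounded ℝ) (cobounded ℂ ⊓ 𝓟 {z | 0 ≤ z.im}) :=
    tendsto_inf.2 ⟨tendsto_norm_atTop_iff_cobounded.1 <| by
      simpa only [Complex.norm_real] using! tendsto_norm_cobounded_atTop (E := ℝ),
      tendsto_principal.2 <| .of_forall fun y => (Complex.ofReal_im y).ge⟩
  have hdecay : (fun y : ℝ => G y) =O[cobounded ℝ] fun y => ‖y‖ ^ (-s) := by
    simpa only [Function.comp_def, Complex.norm_real] using hGs.comp_tendsto hofReal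
  have hint (ε : ℝ) (hε : 0 < ε) :
      IntegrableOn (fun y : ℝ => (x - y)⁻¹ • G y) {y | ε < |x - y|} :=
    integrableOn_inv_sub_smul (continuous_comp_ofReal (continuousOn_setOf_im_nonneg hG)) hs hdecay
      x hε
  have hpv := (Complex.continuous_im.tendsto _).comp
    (tendsto_pi_inv_smul_setIntegral_inv_sub_smul hG hG0 hint)
  rw [smul_eq_mul, Complex.neg_im, Complex.I_mul_im] at hpv
  refine hpv.congr' ?_
  filter_upwards [self_mem_nhdsWithin] with ε hε
  have him := Complex.imCLM.integral_comp_comm (hint ε hε)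
  simp only [Complex.imCLM_apply, Complex.smul_im, smul_eq_mul] at him
  simp only [Function.comp_apply, Complex.smul_im, smul_eq_mul, ← him, div_eq_inv_mul]

/-- The holomorphic extension to the upper half plane of the function whose imaginary part on the
real line is the CLM profile. The factor `-i` turns the upper half plane into the right half plane,
on which the principal branch of the power is continuous. -/
noncomputable def clmExtension (α : ℝ) (z : ℂ) : ℂ := (1 + (-Complex.I * z) ^ (α : ℂ))⁻¹

lemma one_add_cpow_ne_zero {α : ℝ} (hα : |α| < 2) {w : ℂ} (hw : 0 ≤ w.re) :
    1 + w ^ (α : ℂ) ≠ 0 := by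
  intro h
  have hpow : w ^ (α : ℂ) = -1 := (neg_eq_of_add_eq_zero_right h).symm
  have hnorm : ‖w‖ ^ α = 1 := by rw [← Complex.norm_cpow_real, hpow, norm_neg, norm_one]
  have hcos : ‖w‖ ^ α * Real.cos (w.arg * α) = -1 := by
    rw [← Complex.cpow_ofReal_re, hpow, Complex.neg_re, Complex.one_re]
  have harg : |w.arg * α| < Real.pi := by
    calc |w.arg * α| = |w.arg| * |α| := abs_mul _ _
      _ ≤ Real.pi / 2 * |α| := by gcongr; exact Complex.abs_arg_le_pi_div_two_iff.2 hw
      _ < Real.pi / 2 * 2 := by gcongr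
      _ = Real.pi := div_mul_cancel₀ _ two_ne_zero
  have hlt := Real.cos_lt_cos_of_nonneg_of_le_pi (abs_nonneg _) le_rfl harg
  rw [Real.cos_pi, Real.cos_abs, ← hcos, hnorm, one_mul] at hlt
  exact lt_irrefl _ hlt

lemma inv_one_add_isBigO_inv {F : Type*} [NormedField F] :
    (fun v : F => (1 + v)⁻¹) =O[cobounded F] fun v => v⁻¹ := by
  have hequiv : (fun v : F => v + 1) ~[cobounded F] fun v => v :=
    IsEquivalent.refl.add_isLittleO (isLittleO_const_id_cobounded 1)
  simpa only [add_comm, Pi.inv_def] using hequiv.inv.isBigO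

lemma diffContOnCl_clmExtension {α : ℝ} (hα : 0 < α) (hα2 : α < 2) :
    DiffContOnCl ℂ (clmExtension α) {z | 0 < z.im} := by
  have hre (z : ℂ) : (-Complex.I * z).re = z.im := by simp
  have hne {z : ℂ} (hz : 0 ≤ z.im) : 1 + (-Complex.I * z) ^ (α : ℂ) ≠ 0 :=
    one_add_cpow_ne_zero (abs_lt.2 ⟨by linarith, hα2⟩) (by rwa [hre])
  refine DiffContOnCl.inv ⟨fun z hz => ?_, fun z hz => ?_⟩ fun z hz => ?_
  · exact (((differentiableAt_fun_id.const_mul _).cpow_const (.inl (by rwa [hre]))).const_add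
      1).differentiableWithinAt
  · rw [Complex.closure_setOfPred_lt_im] at hz
    have hcpow := Complex.continuousAt_cpow_const_of_re_pos (z := -Complex.I * z) (w := α)
      (.inl (by rwa [hre])) (by simpa)
    exact (continuousAt_const.add (hcpow.comp (by fun_prop))).continuousWithinAt
  · rw [Complex.closure_setOfPred_lt_im] at hz
    exact hne hz

lemma norm_neg_I_mul (z : ℂ) : ‖-Complex.I * z‖ = ‖z‖ := by
  rw [norm_mul, norm_neg, Complex.norm_I, one_mul]

lemma clmExtension_isBigO {α : ℝ} (hα : 0 < α) :
    clmExtension α =O[cobounded ℂ] fun z => ‖z‖ ^ (-α) := by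
  have hnorm (z : ℂ) : ‖(-Complex.I * z) ^ (α : ℂ)‖ = ‖z‖ ^ α := by
    rw [Complex.norm_cpow_real, norm_neg_I_mul]
  have htends : Tendsto (fun z : ℂ => (-Complex.I * z) ^ (α : ℂ)) (cobounded ℂ) (cobounded ℂ) := by
    rw [← tendsto_norm_atTop_iff_cobounded]
    simpa only [hnorm, Function.comp_def] using
      (tendsto_rpow_atTop hα).comp tendsto_norm_cobounded_atTop
  refine (inv_one_add_isBigO_inv.comp_tendsto htends).trans (isBigO_of_le _ fun z => ?_)
  rw [Function.comp_apply, norm_inv, hnorm, Real.rpow_neg (norm_nonneg z)]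
  exact le_abs_self _

lemma arg_neg_I_mul_ofReal {x : ℝ} (hx : x ≠ 0) :
    (-Complex.I * x).arg = -(Real.sign x * (Real.pi / 2)) := by
  rcases hx.lt_or_gt with h | h
  · rw [neg_mul_comm, mul_comm, ← Complex.ofReal_neg, Complex.arg_real_mul _ (neg_pos.2 h),
      Complex.arg_I, Real.sign_of_neg h]
    ring
  · rw [mul_comm, Complex.arg_real_mul _ h, Complex.arg_neg_I, Real.sign_of_pos h, one_mul]

lemma neg_I_mul_ofReal_cpow_re {α : ℝ} (hα : α ≠ 0) (x : ℝ) :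
    ((-Complex.I * x) ^ (α : ℂ)).re = Real.cos (α * Real.pi / 2) * |x| ^ α := by
  rcases eq_or_ne x 0 with rfl | hx
  · simp [hα]
  have hcos : Real.cos (-(Real.sign x * (Real.pi / 2)) * α) = Real.cos (α * Real.pi / 2) := by
    rw [neg_mul, Real.cos_neg, mul_assoc, div_mul_eq_mul_div, mul_comm Real.pi]
    rcases Real.sign_apply_eq_of_ne_zero x hx with h | h <;> simp [h]
  rw [Complex.cpow_ofReal_re, arg_neg_I_mul_ofReal hx, hcos, norm_neg_I_mul,
    Complex.norm_real, Real.norm_eq_abs, mul_comm]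

lemma neg_I_mul_ofReal_cpow_im {α : ℝ} (hα : α ≠ 0) (x : ℝ) :
    ((-Complex.I * x) ^ (α : ℂ)).im = -(Real.sin (α * Real.pi / 2) * Real.sign x * |x| ^ α) := by
  rcases eq_or_ne x 0 with rfl | hx
  · simp [hα]
  have hsin : Real.sin (-(Real.sign x * (Real.pi / 2)) * α) =
      -(Real.sin (α * Real.pi / 2) * Real.sign x) := by
    rw [neg_mul, Real.sin_neg, mul_assoc, div_mul_eq_mul_div, mul_comm Real.pi]
    rcases Real.sign_apply_eq_of_ne_zero x hx with h | h <;> simp [h]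
  rw [Complex.cpow_ofReal_im, arg_neg_I_mul_ofReal hx, hsin, norm_neg_I_mul,
    Complex.norm_real, Real.norm_eq_abs]
  ring

lemma normSq_one_add_cpow {α : ℝ} (hα : α ≠ 0) (x : ℝ) :
    Complex.normSq (1 + (-Complex.I * x) ^ (α : ℂ)) =
      1 + 2 * Real.cos (α * Real.pi / 2) * |x| ^ α + |x| ^ (2 * α) := by
  have hnormSq : Complex.normSq ((-Complex.I * x) ^ (α : ℂ)) = |x| ^ (2 * α) := by
    rw [Complex.normSq_eq_norm_sq, Complex.norm_cpow_real, norm_neg_I_mul, Complex.norm_real,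
      Real.norm_eq_abs, ← Real.rpow_mul_natCast (abs_nonneg x), Nat.cast_ofNat, mul_comm]
  rw [Complex.normSq_add, map_one, hnormSq, one_mul, Complex.conj_re, neg_I_mul_ofReal_cpow_re hα]
  ring

lemma clmExtension_ofReal_re {α : ℝ} (hα : α ≠ 0) (x : ℝ) :
    (clmExtension α x).re = (1 + Real.cos (α * Real.pi / 2) * |x| ^ α) /
      (1 + 2 * Real.cos (α * Real.pi / 2) * |x| ^ α + |x| ^ (2 * α)) := by
  rw [clmExtension, Complex.inv_re, normSq_one_add_cpow hα, Complex.add_re,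
    neg_I_mul_ofReal_cpow_re hα, Complex.one_re]

lemma clmExtension_ofReal_im {α : ℝ} (hα : α ≠ 0) (x : ℝ) :
    (clmExtension α x).im = Real.sin (α * Real.pi / 2) * Real.sign x * |x| ^ α /
      (1 + 2 * Real.cos (α * Real.pi / 2) * |x| ^ α + |x| ^ (2 * α)) := by
  rw [clmExtension, Complex.inv_im, normSq_one_add_cpow hα, Complex.add_im,
    neg_I_mul_ofReal_cpow_im hα, Complex.one_im, zero_add, neg_neg]

theorem hilbert_of_holder_CLM_profile_general (α : ℝ) (hα : 0 < α) (hα2 : α < 2) :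
    IsPVHilbert
      (fun z : ℝ => Real.sin (α * Real.pi / 2) * Real.sign z * |z| ^ α /
        (1 + 2 * Real.cos (α * Real.pi / 2) * |z| ^ α + |z| ^ (2 * α)))
      (fun z : ℝ => -(1 + Real.cos (α * Real.pi / 2) * |z| ^ α) /
        (1 + 2 * Real.cos (α * Real.pi / 2) * |z| ^ α + |z| ^ (2 * α))) := by
  have hpv := isPVHilbert_im_neg_re (diffContOnCl_clmExtension hα hα2) hα
    ((clmExtension_isBigO hα).mono inf_le_left)
  simpa only [clmExtension_ofReal_re hα.ne', clmExtension_ofReal_im hα.ne', ← neg_div] using hpv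

/-- The Hilbert transform of the `C^α` self-similar CLM profile. -/
theorem hilbert_of_holder_CLM_profile (α : ℝ) (hα : 0 < α) (hα1 : α < 1) :
    IsPVHilbert
      (fun z : ℝ => Real.sin (α * Real.pi / 2) * Real.sign z * |z| ^ α /
        (1 + 2 * Real.cos (α * Real.pi / 2) * |z| ^ α + |z| ^ (2 * α)))
      (fun z : ℝ => -(1 + Real.cos (α * Real.pi / 2) * |z| ^ α) /
        (1 + 2 * Real.cos (α * Real.pi / 2) * |z| ^ α + |z| ^ (2 * α))) :=
  hilbert_of_holder_CLM_profile_general α hα (hα1.trans one_lt_two)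
end
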